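/- arXiv:1008.4548 — 7 statements merged into one kernel-verified Lean document; each statement's English description precedes it below -/
import Mathlib

section
/- Every infinite traceable graph containing no chordless 4-path contains a subgraph isomorphic to the complete countable bipartite graph K_{ω,ω}. -/
/-- `G` contains a chordless path on `n` vertices: `n` distinct vertices
`v 0, …, v (n-1)` where `v i` and `v j` are adjacent iff `|i - j| = 1`. -/
def HasChordlessPath {V : Type*} (G : SimpleGraph V) (n : ℕ) : Prop :=
  ∃ v : Fin n → V, Function.Injective v ∧
    ∀ i j : Fin n, G.Adj (v i) (v j) ↔ ((i : ℕ) + 1 = (j : ℕ) ∨ (j : ℕ) + 1 = (i : ℕ))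

/-- `G` contains a subgraph isomorphic to `H`. -/
def ContainsCopy {V W : Type*} (G : SimpleGraph V) (H : SimpleGraph W) : Prop :=
  ∃ g : W → V, Function.Injective g ∧ ∀ x y : W, H.Adj x y → G.Adj (g x) (g y)

theorem aux_p4 {V : Type*} (G : SimpleGraph V) (hG : ¬ HasChordlessPath G 4)
    (a b c d : V) (h1 : G.Adj a b) (h2 : G.Adj b c) (h3 : G.Adj c d) :
    G.Adj a c ∨ G.Adj a d ∨ G.Adj b d := by
  by_contra hcon
  push Not at hcon
  obtain ⟨n1, n2, n3⟩ := hcon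
  have e1 : a ≠ c := by rintro rfl; exact n2 h3
  have e2 : a ≠ d := by rintro rfl; exact n1 h3.symm
  have e3 : b ≠ d := by rintro rfl; exact n2 h1
  have m1 : ¬ G.Adj c a := fun h => n1 (SimpleGraph.Adj.symm h)
  have m2 : ¬ G.Adj d a := fun h => n2 (SimpleGraph.Adj.symm h)
  have m3 : ¬ G.Adj d b := fun h => n3 (SimpleGraph.Adj.symm h)
  apply hG
  refine ⟨![a, b, c, d], ?_, ?_⟩
  · intro i j hij
    fin_cases i <;> fin_cases j <;>
      simp_all [h1.ne, h2.ne, h3.ne, h1.ne', h2.ne', h3.ne', e1.symm, e2.symm, e3.symm]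
  · intro i j
    fin_cases i <;> fin_cases j <;>
      simp [h1, h2, h3, h1.symm, h2.symm, h3.symm, n1, n2, n3, m1, m2, m3]

theorem aux_copy {V : Type*} (G : SimpleGraph V) (p q : ℕ → V)
    (hp : Function.Injective p) (hq : Function.Injective q)
    (h : ∀ i j, G.Adj (p i) (q j)) : ContainsCopy G (completeBipartiteGraph ℕ ℕ) := by
  refine ⟨Sum.elim p q, ?_, ?_⟩
  · exact hp.sumElim hq (fun i j => (h i j).ne)
  · rintro (x | x) (y | y) hxy
    · simp at hxy
    · exact h x y
    · exact (h y x).symm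
    · simp at hxy

theorem aux_clique {V : Type*} (G : SimpleGraph V) (p : ℕ → V)
    (h : ∀ i j, i < j → G.Adj (p i) (p j)) : ContainsCopy G (completeBipartiteGraph ℕ ℕ) := by
  have h' : ∀ i j, i ≠ j → G.Adj (p i) (p j) := by
    intro i j hij
    rcases lt_or_gt_of_ne hij with h1 | h1
    · exact h i j h1
    · exact (h j i h1).symm
  have hinj : Function.Injective p := by
    intro i j hij
    by_contra hne
    exact (h' i j hne).ne hij
  refine aux_copy G (fun n => p (2 * n)) (fun n => p (2 * n + 1)) ?_ ?_ ?_
  · intro i j hij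
    have := hinj hij
    omega
  · intro i j hij
    have := hinj hij
    omega
  · intro i j
    exact h' _ _ (by omega)

open Filter in
theorem aux_seq (R : ℕ → ℕ → Prop)
    (hS : ∀ᶠ i in (hyperfilter ℕ : Filter ℕ), ∀ᶠ j in (hyperfilter ℕ : Filter ℕ), R i j) :
    ∃ φ : ℕ → ℕ, StrictMono φ ∧ ∀ i j, i < j → R (φ i) (φ j) := by
  obtain ⟨f, hf, hr⟩ := exists_seq_of_forall_finset_exists
    (fun i => ∀ᶠ j in (hyperfilter ℕ : Filter ℕ), R i j) (fun i j => i < j ∧ R i j) (by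
      intro s hs
      have h1 : ∀ᶠ y in (hyperfilter ℕ : Filter ℕ), ∀ x ∈ s, x < y ∧ R x y := by
        rw [Filter.eventually_all_finset]
        intro x hx
        have h2 : ∀ᶠ y in (hyperfilter ℕ : Filter ℕ), x < y :=
          Nat.hyperfilter_le_atTop (eventually_gt_atTop x)
        exact h2.and (hs x hx)
      exact (hS.and h1).exists)
  exact ⟨f, fun i j hij => (hr i j hij).1, fun i j hij => (hr i j hij).2⟩

open Filter in
theorem aux_half {V : Type*} (G : SimpleGraph V) (hG : ¬ HasChordlessPath G 4) (p q : ℕ → V)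
    (hp : Function.Injective p) (hq : Function.Injective q)
    (h : ∀ i j, i ≤ j → G.Adj (p i) (q j)) :
    ContainsCopy G (completeBipartiteGraph ℕ ℕ) := by
  have key : ∀ i j, i < j → G.Adj (p i) (p j) ∨ G.Adj (q i) (q j) ∨ G.Adj (p j) (q i) := by
    intro i j hij
    rcases aux_p4 G hG (p j) (q j) (p i) (q i) (h j j le_rfl) (h i j hij.le).symm (h i i le_rfl)
      with h1 | h1 | h1
    · exact Or.inl h1.symm
    · exact Or.inr (Or.inr h1)
    · exact Or.inr (Or.inl h1.symm)
  have h3 : ∀ i, (∀ᶠ j in (hyperfilter ℕ : Filter ℕ), G.Adj (p i) (p j)) ∨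
      (∀ᶠ j in (hyperfilter ℕ : Filter ℕ), G.Adj (q i) (q j)) ∨
      (∀ᶠ j in (hyperfilter ℕ : Filter ℕ), G.Adj (p j) (q i)) := by
    intro i
    rw [← Ultrafilter.eventually_or, ← Ultrafilter.eventually_or]
    have h2 : ∀ᶠ y in (hyperfilter ℕ : Filter ℕ), i < y :=
      Nat.hyperfilter_le_atTop (eventually_gt_atTop i)
    exact h2.mono (fun j hj => key i j hj)
  have h4 := Eventually.of_forall (f := (hyperfilter ℕ : Filter ℕ)) h3
  rw [Ultrafilter.eventually_or, Ultrafilter.eventually_or] at h4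
  rcases h4 with h4 | h4 | h4
  · obtain ⟨φ, -, hφ⟩ := aux_seq _ h4
    exact aux_clique G (p ∘ φ) hφ
  · obtain ⟨φ, -, hφ⟩ := aux_seq _ h4
    exact aux_clique G (q ∘ φ) hφ
  · obtain ⟨φ, hm, hφ⟩ := aux_seq _ h4
    refine aux_copy G (p ∘ φ) (q ∘ φ) (hp.comp hm.injective) (hq.comp hm.injective) ?_
    intro i j
    rcases le_or_gt i j with hij | hij
    · exact h _ _ (hm.monotone hij)
    · exact hφ j i hij

theorem aux_pairs {V : Type*} (G : SimpleGraph V) (hG : ¬ HasChordlessPath G 4)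
    (P : V × V → Prop) (hP : ∀ z, P z → G.Adj z.1 z.2)
    (h : ∀ s : Finset (V × V), (∀ z ∈ s, P z) →
      ∃ y, P y ∧ ∀ z ∈ s, z.1 ≠ y.1 ∧ z.2 ≠ y.2 ∧ G.Adj z.1 y.2) :
    ContainsCopy G (completeBipartiteGraph ℕ ℕ) := by
  obtain ⟨f, hf, hr⟩ := exists_seq_of_forall_finset_exists P
    (fun z y => z.1 ≠ y.1 ∧ z.2 ≠ y.2 ∧ G.Adj z.1 y.2) h
  refine aux_half G hG (fun n => (f n).1) (fun n => (f n).2) ?_ ?_ ?_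
  · intro i j hij
    by_contra hne
    rcases lt_or_gt_of_ne hne with h1 | h1
    · exact (hr i j h1).1 hij
    · exact (hr j i h1).1 hij.symm
  · intro i j hij
    by_contra hne
    rcases lt_or_gt_of_ne hne with h1 | h1
    · exact (hr i j h1).2.1 hij
    · exact (hr j i h1).2.1 hij.symm
  · intro i j hij
    rcases hij.lt_or_eq with h1 | rfl
    · exact (hr i j h1).2.2
    · exact hP _ (hf i)

open Filter in
/-- Every infinite traceable graph containing no chordless 4-path contains a
subgraph isomorphic to the complete countable bipartite graph `K_{ω,ω}`. -/
theorem traceable_no_chordless_four_path_copy_of_Komegaomega {V : Type*} (G : SimpleGraph V)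
    (T : ℕ ≃ V) (hT : ∀ i : ℕ, G.Adj (T i) (T (i + 1)))
    (hG : ¬ HasChordlessPath G 4) :
    ContainsCopy G (completeBipartiteGraph ℕ ℕ) := by
  have P4 := aux_p4 G hG
  haveI : Infinite V := T.infinite_iff.mp inferInstance
  have hne : ∀ v : V, ∀ᶠ w in (hyperfilter V : Filter V), v ≠ w := by
    intro v
    have : ({v}ᶜ : Set V) ∈ hyperfilter V := compl_mem_hyperfilter_of_finite (Set.finite_singleton v)
    exact Filter.mem_of_superset this (fun w hw => Ne.symm hw)
  by_cases hA : {v : V | ∀ᶠ w in (hyperfilter V : Filter V), G.Adj v w}.Infinite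
  · apply aux_pairs G hG
      (fun z => (∀ᶠ w in (hyperfilter V : Filter V), G.Adj z.1 w) ∧ G.Adj z.1 z.2) (fun z hz => hz.2)
    intro s hs
    obtain ⟨a, ha, has⟩ := hA.exists_notMem_finite (s.finite_toSet.image Prod.fst)
    have h1 : ∀ᶠ w in (hyperfilter V : Filter V), ∀ z ∈ s, z.2 ≠ w ∧ G.Adj z.1 w := by
      rw [Filter.eventually_all_finset]
      intro z hz
      exact (hne z.2).and (hs z hz).1
    obtain ⟨b, hb, hbs⟩ := (Eventually.and ha h1).exists
    refine ⟨(a, b), ⟨ha, hb⟩, fun z hz => ⟨?_, hbs z hz⟩⟩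
    rintro h
    exact has ⟨z, hz, h⟩
  · rw [Set.not_infinite] at hA
    obtain ⟨N, hN⟩ : ∃ N, ∀ n ≥ N, ¬ ∀ᶠ w in (hyperfilter V : Filter V), G.Adj (T n) w := by
      obtain ⟨M, hM⟩ := (hA.image T.symm).bddAbove
      refine ⟨M + 1, fun n hn h => ?_⟩
      have := hM ⟨T n, h, T.symm_apply_apply n⟩
      omega
    have hN' : ∀ n ≥ N, ∀ᶠ w in (hyperfilter V : Filter V), ¬ G.Adj (T n) w :=
      fun n hn => Ultrafilter.eventually_not.mpr (hN n hn)
    have hdist : ∀ n ≥ N, T n = T N ∨ G.Adj (T N) (T n) ∨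
        ∃ m ≥ N, G.Adj (T N) (T m) ∧ G.Adj (T m) (T n) := by
      intro n hn
      induction n, hn using Nat.le_induction with
      | base => exact Or.inl rfl
      | succ n hn ih =>
        rcases ih with h | h | ⟨m, hm, h1, h2⟩
        · right; left; rw [← h]; exact hT n
        · exact Or.inr (Or.inr ⟨n, hn, h, hT n⟩)
        · rcases P4 _ _ _ _ h1 h2 (hT n) with h | h | h
          · exact Or.inr (Or.inr ⟨n, hn, h, hT n⟩)
          · exact Or.inr (Or.inl h)
          · exact Or.inr (Or.inr ⟨m, hm, h1, h⟩)
    have htail : ∀ᶠ w in (hyperfilter V : Filter V), ∃ n ≥ N, T n = w := by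
      have hfin : (T '' Set.Iio N).Finite := (Set.finite_Iio N).image T
      refine Filter.mem_of_superset (compl_mem_hyperfilter_of_finite hfin) (fun w hw => ?_)
      refine ⟨T.symm w, ?_, T.apply_symm_apply w⟩
      by_contra hlt
      exact hw ⟨T.symm w, not_le.mp hlt, T.apply_symm_apply w⟩
    apply aux_pairs G hG (fun z => ¬ G.Adj (T N) z.1 ∧ (∃ m ≥ N, T m = z.2) ∧
      G.Adj (T N) z.2 ∧ G.Adj z.1 z.2) (fun z hz => hz.2.2.2)
    intro s hs
    have h1 : ∀ᶠ w in (hyperfilter V : Filter V), ∀ z ∈ s, ¬ G.Adj z.2 w := by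
      rw [Filter.eventually_all_finset]
      intro z hz
      obtain ⟨-, ⟨m, hm, hmz⟩, -⟩ := hs z hz
      rw [← hmz]
      exact hN' m hm
    obtain ⟨w, ⟨⟨n, hn, rfl⟩, hw1⟩, hw2, hw3⟩ :=
      ((htail.and (hne (T N))).and ((hN' N le_rfl).and h1)).exists
    rcases hdist n hn with h | h | ⟨m, hm, h2, h3⟩
    · exact absurd h.symm hw1
    · exact absurd h hw2
    refine ⟨(T n, T m), ⟨hw2, ⟨m, hm, rfl⟩, h2, h3.symm⟩, fun z hz => ?_⟩
    obtain ⟨z1, -, z3, z4⟩ := hs z hz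
    have hzn := hw3 z hz
    refine ⟨?_, ?_, ?_⟩
    · intro h
      rw [h] at z4
      exact hzn z4.symm
    · intro h
      rw [h] at hzn
      exact hzn h3
    · by_contra hcon
      change ¬ G.Adj z.1 (T m) at hcon
      have hxy : G.Adj z.2 (T m) := by
        rcases P4 _ _ _ _ z4 z3.symm h2 with h | h | h
        · exact absurd h.symm z1
        · exact absurd h hcon
        · exact h
      have hab : G.Adj z.1 (T n) := by
        rcases P4 _ _ _ _ z4 hxy h3 with h | h | h
        · exact absurd h hcon
        · exact h
        · exact absurd h hzn
      rcases P4 _ _ _ _ z3 z4.symm hab with h | h | h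
      · exact z1 h
      · exact hw2 h
      · exact hzn h
end

section
/- For every n ∈ ℕ there is an m ∈ ℕ such that every finite traceable graph G with at least m vertices either contains a subgraph isomorphic to K_{2,2} or contains a chordless n-path. -/
/-- A finite graph on vertex type `V` is traceable: there is a bijection
`T : Fin (card V) ≃ V` with consecutive vertices adjacent. -/
def FinTraceable {V : Type*} [Fintype V] (G : SimpleGraph V) : Prop :=
  ∃ T : Fin (Fintype.card V) ≃ V, ∀ (i : ℕ) (h : i + 1 < Fintype.card V),
    G.Adj (T ⟨i, Nat.lt_of_succ_lt h⟩) (T ⟨i + 1, h⟩)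

theorem aux_ramsey_pre {κ : Type} [Fintype κ] (r : ℕ)
    (IH : ∀ k : ℕ, ∃ N : ℕ, ∀ S : Finset ℕ, N ≤ S.card → ∀ f : List ℕ → κ,
      ∃ T ⊆ S, k ≤ T.card ∧ ∃ c, ∀ l : List ℕ, l.length = r → l.Pairwise (· < ·) →
        (∀ x ∈ l, x ∈ T) → f l = c) (m : ℕ) :
    ∃ N : ℕ, ∀ S : Finset ℕ, N ≤ S.card → ∀ f : List ℕ → κ,
      ∃ T ⊆ S, m ≤ T.card ∧ ∃ g : ℕ → κ, ∀ (x : ℕ) (l : List ℕ), l.length = r →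
        (x :: l).Pairwise (· < ·) → (∀ y ∈ x :: l, y ∈ T) → f (x :: l) = g x := by
  classical
  induction m with
  | zero =>
    refine ⟨0, fun S _ f => ⟨∅, by simp, by simp, fun _ => f [], ?_⟩⟩
    intro x l _ _ h
    simpa using h x (by simp)
  | succ m ihm =>
    obtain ⟨N1, h1⟩ := ihm
    obtain ⟨N2, h2⟩ := IH N1
    refine ⟨N2 + 1, fun S hS f => ?_⟩
    have hne : S.Nonempty := Finset.card_pos.mp (by omega)
    set a := S.min' hne with ha
    have haS : a ∈ S := S.min'_mem hne
    obtain ⟨S1, hS1, hc1, c, hc⟩ := h2 (S.erase a)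
      (by rw [Finset.card_erase_of_mem haS]; omega) (fun l => f (a :: l))
    obtain ⟨T, hT, hcT, g, hg⟩ := h1 S1 hc1 f
    have hTS : T ⊆ S.erase a := hT.trans hS1
    have haT : a ∉ T := fun h => by simpa using hTS h
    have hlt : ∀ y ∈ T, a < y := by
      intro y hy
      have h := hTS hy
      rw [Finset.mem_erase] at h
      exact lt_of_le_of_ne (S.min'_le y h.2) (Ne.symm h.1)
    refine ⟨insert a T, ?_, ?_, fun x => if x = a then c else g x, ?_⟩
    · intro y hy
      rcases Finset.mem_insert.mp hy with rfl | hy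
      · exact haS
      · exact Finset.mem_of_mem_erase (hTS hy)
    · rw [Finset.card_insert_of_notMem haT]; omega
    · intro x l hl hp hm
      have hp' := List.pairwise_cons.mp hp
      have hx := hm x (by simp)
      have hax : a ≤ x := by
        rcases Finset.mem_insert.mp hx with h | h
        · exact h.ge
        · exact (hlt x h).le
      have hlT : ∀ y ∈ l, y ∈ T := by
        intro y hy
        rcases Finset.mem_insert.mp (hm y (by simp [hy])) with h | h
        · have := hp'.1 y hy
          omega
        · exact h
      by_cases hxa : x = a
      · simp only [hxa, if_true]
        exact hc l hl hp'.2 (fun y hy => hT (hlT y hy))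
      · simp only [hxa, if_false]
        refine hg x l hl hp ?_
        intro y hy
        rcases List.mem_cons.mp hy with rfl | hy
        · exact (Finset.mem_insert.mp hx).resolve_left hxa
        · exact hlT y hy

theorem aux_ramsey {κ : Type} [Fintype κ] (r : ℕ) :
    ∀ k : ℕ, ∃ N : ℕ, ∀ S : Finset ℕ, N ≤ S.card → ∀ f : List ℕ → κ,
      ∃ T ⊆ S, k ≤ T.card ∧ ∃ c, ∀ l : List ℕ, l.length = r → l.Pairwise (· < ·) →
        (∀ x ∈ l, x ∈ T) → f l = c := by
  classical
  induction r with
  | zero =>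
    intro k
    refine ⟨k, fun S hS f => ⟨S, subset_rfl, hS, f [], ?_⟩⟩
    intro l hl _ _
    rw [List.length_eq_zero_iff.mp hl]
  | succ r IH =>
    intro k
    obtain ⟨N, hN⟩ := aux_ramsey_pre (κ := κ) r IH (Fintype.card κ * k + 1)
    refine ⟨N, fun S hS f => ?_⟩
    obtain ⟨T, hT, hcT, g, hg⟩ := hN S hS f
    have hκ : Nonempty κ := ⟨f []⟩
    obtain ⟨c, -, hc⟩ := Finset.exists_le_card_fiber_of_mul_le_card_of_maps_to
      (s := T) (t := (Finset.univ : Finset κ)) (f := g) (n := k)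
      (fun _ _ => Finset.mem_univ _) Finset.univ_nonempty (by rw [Finset.card_univ]; omega)
    refine ⟨T.filter (fun x => g x = c), (Finset.filter_subset _ _).trans hT, hc, c, ?_⟩
    intro l hl hp hm
    cases l with
    | nil => simp at hl
    | cons x l =>
      rw [hg x l (by simpa using hl) hp (fun y hy => (Finset.mem_filter.mp (hm y hy)).1)]
      exact (Finset.mem_filter.mp (hm x (by simp))).2

theorem aux_lazy {V : Type} (G : SimpleGraph V) (n : ℕ) (hG : ¬ HasChordlessPath G n)
    (S : Set V) (a b : S) (hab : (G.induce S).Reachable a b) :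
    ∃ p : ℕ → V, p 0 = a ∧ p n = b ∧ (∀ s, p s ∈ S) ∧
      ∀ s, p s = p (s + 1) ∨ G.Adj (p s) (p (s + 1)) := by
  obtain ⟨w, hw⟩ := hab.exists_walk_length_eq_dist
  have hd : w.length ≤ n := by
    by_contra hlt
    push Not at hlt
    apply hG
    have key : ∀ i ≤ w.length, (G.induce S).dist a (w.getVert i) = i := by
      intro i hi
      have h1 : (G.induce S).dist a (w.getVert i) ≤ i := by
        have := SimpleGraph.dist_le (w.take i)
        rw [SimpleGraph.Walk.take_length] at this
        omega
      have h2 := SimpleGraph.dist_le (w.drop i)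
      rw [SimpleGraph.Walk.drop_length] at h2
      obtain ⟨q, hq⟩ := (w.take i).reachable.exists_walk_length_eq_dist
      have h3 := SimpleGraph.dist_le (q.append (w.drop i))
      rw [SimpleGraph.Walk.length_append, SimpleGraph.Walk.drop_length] at h3
      omega
    have key2 : ∀ i j, i ≤ w.length → j ≤ w.length →
        (G.induce S).Adj (w.getVert i) (w.getVert j) → j ≤ i + 1 := by
      intro i j hi hj hadj
      obtain ⟨q, hq⟩ := (w.take i).reachable.exists_walk_length_eq_dist
      have h3 := SimpleGraph.dist_le (q.concat hadj)
      rw [SimpleGraph.Walk.length_concat, hq, key i hi, key j hj] at h3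
      exact h3
    have hinj : ∀ i j, i ≤ w.length → j ≤ w.length → w.getVert i = w.getVert j → i = j := by
      intro i j hi hj h
      rw [← key i hi, ← key j hj, h]
    refine ⟨fun i => (w.getVert i : V), ?_, ?_⟩
    · intro i j h
      exact Fin.ext (hinj i j (by omega) (by omega) (Subtype.ext h))
    · intro i j
      have hi : (i : ℕ) ≤ w.length := by omega
      have hj : (j : ℕ) ≤ w.length := by omega
      constructor
      · intro h
        have h1 := key2 i j hi hj h
        have h2 := key2 j i hj hi h.symm
        have h3 : (i : ℕ) ≠ j := by
          intro h3
          simp only [h3] at h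
          exact G.irrefl h
        omega
      · rintro (h | h)
        · have := w.adj_getVert_succ (i := (i : ℕ)) (by omega)
          rw [h] at this
          exact this
        · have := w.adj_getVert_succ (i := (j : ℕ)) (by omega)
          rw [h] at this
          exact this.symm
  refine ⟨fun s => (w.getVert s : V), by simp, ?_, fun s => (w.getVert s).2, ?_⟩
  · simp [w.getVert_of_length_le hd]
  · intro s
    by_cases hs : s < w.length
    · right
      exact w.adj_getVert_succ hs
    · left
      simp only
      rw [w.getVert_of_length_le (by omega), w.getVert_of_length_le (by omega)]

theorem aux_block {V : Type} (G : SimpleGraph V) (n N : ℕ) (hG : ¬ HasChordlessPath G n)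
    (v : ℕ → V) (hadj : ∀ i, i + 1 < N → G.Adj (v i) (v (i + 1))) (i j : ℕ) :
    ∃ p : ℕ → V, i < j → j < N → p 0 = v i ∧ p n = v j ∧
      (∀ s, ∃ x, i ≤ x ∧ x ≤ j ∧ p s = v x) ∧
      ∀ s, p s = p (s + 1) ∨ G.Adj (p s) (p (s + 1)) := by
  by_cases h : i < j ∧ j < N
  · obtain ⟨hij, hj⟩ := h
    let S : Set V := {y | ∃ x, i ≤ x ∧ x ≤ j ∧ y = v x}
    have hmem : ∀ x, i ≤ x → x ≤ j → v x ∈ S := fun x h1 h2 => ⟨x, h1, h2, rfl⟩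
    have hr : ∀ d (hd : i + d ≤ j), (G.induce S).Reachable ⟨v i, hmem i le_rfl hij.le⟩
        ⟨v (i + d), hmem _ (by omega) hd⟩ := by
      intro d
      induction d with
      | zero => intro _; exact SimpleGraph.Reachable.refl _
      | succ d ih =>
        intro hd
        refine (ih (by omega)).trans (SimpleGraph.Adj.reachable ?_)
        exact hadj (i + d) (by omega)
    obtain ⟨p, h0, h1, h2, h3⟩ := aux_lazy G n hG S _ _ (hr (j - i) (by omega))
    refine ⟨p, fun _ _ => ⟨h0, ?_, h2, h3⟩⟩
    rw [h1]
    simp only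
    congr 1
    omega
  · exact ⟨fun _ => v 0, fun h1 h2 => absurd ⟨h1, h2⟩ h⟩

theorem aux_K22 {V : Type} (G : SimpleGraph V) (a b x y : V) (hab : a ≠ b) (hxy : x ≠ y)
    (a1 : G.Adj a x) (a2 : G.Adj a y) (a3 : G.Adj b x) (a4 : G.Adj b y) :
    ContainsCopy G (completeBipartiteGraph (Fin 2) (Fin 2)) := by
  have e1 := a1.ne
  have e2 := a2.ne
  have e3 := a3.ne
  have e4 := a4.ne
  refine ⟨Sum.elim ![a, b] ![x, y], ?_, ?_⟩
  · rintro (i | i) (j | j) h <;> fin_cases i <;> fin_cases j <;> simp at h ⊢ <;>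
      first
        | exact hab h
        | exact hab h.symm
        | exact hxy h
        | exact hxy h.symm
        | simp_all
  · rintro (i | i) (j | j) h <;> fin_cases i <;> fin_cases j <;>
      simp [a1, a2, a3, a4, a1.symm, a2.symm, a3.symm, a4.symm] at h ⊢

theorem aux_main {V : Type} (G : SimpleGraph V) (n N : ℕ) (hG : ¬ HasChordlessPath G n)
    (hK : ¬ ContainsCopy G (completeBipartiteGraph (Fin 2) (Fin 2)))
    (v : ℕ → V) (hadj : ∀ i, i + 1 < N → G.Adj (v i) (v (i + 1)))
    (hinj : ∀ i j, i < N → j < N → v i = v j → i = j)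
    (hR : ∀ f : List ℕ → Set (Fin (n + 1) × Fin (n + 1)),
      ∃ T ⊆ Finset.range N, n + 8 ≤ T.card ∧ ∃ c, ∀ l : List ℕ, l.length = 4 →
        l.Pairwise (· < ·) → (∀ x ∈ l, x ∈ T) → f l = c) : False := by
  classical
  choose p hp using aux_block G n N hG v hadj
  obtain ⟨T, hTN, hTc, c, hc⟩ := hR (fun l => {q | G.Adj
    (p (l.getD 0 0) (l.getD 1 0) q.1) (p (l.getD 2 0) (l.getD 3 0) q.2)})
  obtain ⟨T', hT'T, hT'c⟩ := Finset.exists_subset_card_eq hTc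
  let e := T'.orderEmbOfFin hT'c
  let t : ℕ → ℕ := fun m => if h : m < n + 8 then e ⟨m, h⟩ else 0
  have htT : ∀ m, m < n + 8 → t m ∈ T := by
    intro m hm
    simp only [t, hm, dif_pos]
    exact hT'T (Finset.orderEmbOfFin_mem _ _ _)
  have htN : ∀ m, m < n + 8 → t m < N := fun m hm => Finset.mem_range.mp (hTN (htT m hm))
  have htlt : ∀ a b, a < b → b < n + 8 → t a < t b := by
    intro a b hab hb
    simp only [t, hb, hab.trans hb, dif_pos]
    exact e.strictMono (by simpa using hab)
  have htle : ∀ a b, a ≤ b → b < n + 8 → t a ≤ t b := by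
    intro a b hab hb
    rcases hab.eq_or_lt with rfl | h
    · exact le_rfl
    · exact (htlt a b h hb).le
  have hcol : ∀ a b x y, a < b → b < x → x < y → y < n + 8 → ∀ q : Fin (n + 1) × Fin (n + 1),
      G.Adj (p (t a) (t b) q.1) (p (t x) (t y) q.2) ↔ q ∈ c := by
    intro a b x y hab hbx hxy hy q
    have h1 := htlt a b hab (by omega)
    have h2 := htlt b x hbx (by omega)
    have h3 := htlt x y hxy (by omega)
    have := hc [t a, t b, t x, t y] rfl (by simp; omega) (by
      simp only [List.mem_cons, List.not_mem_nil, or_false]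
      rintro z (rfl | rfl | rfl | rfl) <;> exact htT _ (by omega))
    rw [← this]
    simp
  have hP : ∀ a b, a < b → b < n + 8 → _ := fun a b hab hb =>
    hp (t a) (t b) (htlt a b hab hb) (htN b hb)
  -- blocks that are separated have distinct vertices
  have hdisj : ∀ a b x y, a < b → b < x → x < y → y < n + 8 → ∀ s r,
      p (t a) (t b) s ≠ p (t x) (t y) r := by
    intro a b x y hab hbx hxy hy s r h
    obtain ⟨z, h1, h2, h3⟩ := (hP a b hab (by omega)).2.2.1 s
    obtain ⟨z', h1', h2', h3'⟩ := (hP x y hxy (by omega)).2.2.1 r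
    have h4 := htlt b x hbx (by omega)
    have h5 := htN b (by omega)
    have h6 := htN y (by omega)
    have := hinj z z' (by omega) (by omega) (by rw [← h3, ← h3', h])
    omega
  have hcempty : ∀ q, q ∉ c := by
    intro q hq
    apply hK
    have a1 := (hcol 0 1 4 5 (by omega) (by omega) (by omega) (by omega) q).mpr hq
    have a2 := (hcol 0 1 6 7 (by omega) (by omega) (by omega) (by omega) q).mpr hq
    have a3 := (hcol 2 3 4 5 (by omega) (by omega) (by omega) (by omega) q).mpr hq
    have a4 := (hcol 2 3 6 7 (by omega) (by omega) (by omega) (by omega) q).mpr hq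
    have d1 := hdisj 0 1 2 3 (by omega) (by omega) (by omega) (by omega) q.1 q.1
    have d2 := hdisj 4 5 6 7 (by omega) (by omega) (by omega) (by omega) q.2 q.2
    exact aux_K22 G _ _ _ _ d1 d2 a1 a2 a3 a4
  let B : ℕ → Set V := fun m => {y | ∃ s, s ≤ n ∧ y = p (t m) (t (m + 1)) s}
  let H : Set V := {y | ∃ m, m < n + 2 ∧ y ∈ B m}
  have hB : ∀ m s, m < n + 2 → s ≤ n → p (t m) (t (m + 1)) s ∈ H :=
    fun m s hm hs => ⟨m, hm, s, hs, rfl⟩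
  have hP' : ∀ m, m < n + 2 → _ := fun m hm => hP m (m + 1) (by omega) (by omega)
  have hreach : ∀ m (hm : m < n + 2) s (hs : s ≤ n), (G.induce H).Reachable
      ⟨p (t 0) (t (0 + 1)) 0, hB 0 0 (by omega) (by omega)⟩
      ⟨p (t m) (t (m + 1)) s, hB m s hm hs⟩ := by
    intro m
    have hin : ∀ (hm : m < n + 2) s (hs : s ≤ n), (G.induce H).Reachable
      ⟨p (t m) (t (m + 1)) 0, hB m 0 hm (by omega)⟩
      ⟨p (t m) (t (m + 1)) s, hB m s hm hs⟩ := by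
      intro hm s
      induction s with
      | zero => intro _; exact SimpleGraph.Reachable.refl _
      | succ s ih =>
        intro hs
        refine (ih (by omega)).trans ?_
        rcases (hP' m hm).2.2.2 s with h | h
        · simp only [h]
          exact SimpleGraph.Reachable.refl _
        · exact SimpleGraph.Adj.reachable (G := G.induce H) h
    induction m with
    | zero => exact hin
    | succ m ih =>
      intro hm s hs
      have h1 := ih (by
        intro hm' s' hs'
        induction s' with
        | zero => exact SimpleGraph.Reachable.refl _
        | succ s ih =>
          refine (ih (by omega)).trans ?_
          rcases (hP' m hm').2.2.2 s with h | h
          · simp only [h]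
            exact SimpleGraph.Reachable.refl _
          · exact SimpleGraph.Adj.reachable (G := G.induce H) h) (by omega) n le_rfl
      have h2 := hin hm s hs
      have h3 : p (t m) (t (m + 1)) n = p (t (m + 1)) (t (m + 1 + 1)) 0 := by
        rw [(hP' m (by omega)).2.1, (hP' (m + 1) hm).1]
      simp only [h3] at h1
      exact h1.trans h2
  obtain ⟨w, w0, wn, wH, ws⟩ := aux_lazy G n hG H _ _ (hreach (n + 1) (by omega) n le_rfl)
  have hstep : ∀ a b, a < n + 2 → b < n + 2 → ∀ x ∈ B a, ∀ y ∈ B b, (x = y ∨ G.Adj x y) →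
      b ≤ a + 1 := by
    rintro a b ha hb x ⟨s, hs, rfl⟩ y ⟨r, hr, rfl⟩ h
    by_contra hlt
    rcases h with h | h
    · exact hdisj a (a + 1) b (b + 1) (by omega) (by omega) (by omega) (by omega) s r h
    · exact hcempty (⟨s, by omega⟩, ⟨r, by omega⟩)
        ((hcol a (a + 1) b (b + 1) (by omega) (by omega) (by omega) (by omega)
          (⟨s, by omega⟩, ⟨r, by omega⟩)).mp h)
  have hbound : ∀ s m, m < n + 2 → w s ∈ B m → m ≤ s := by
    intro s
    induction s with
    | zero =>
      rintro m hm ⟨r, hr, h⟩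
      simp only [w0, (hP' 0 (by omega)).1] at h
      obtain ⟨z, h1, h2, h3⟩ := (hP' m hm).2.2.1 r
      rw [h3] at h
      have h5 := htN 0 (by omega)
      have h6 := htN (m + 1) (by omega)
      have := hinj _ _ h5 (by omega) h
      by_contra hlt
      have := htlt 0 m (by omega) (by omega)
      omega
    | succ s ih =>
      intro m hm hw
      obtain ⟨m', hm', hw'⟩ := wH s
      have h1 := ih m' hm' hw'
      have h2 := hstep m' m hm' hm _ hw' _ hw (ws s)
      omega
  have := hbound n (n + 1) (by omega) ⟨n, le_rfl, wn⟩
  omega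

/-- For every `n` there is an `m` such that every finite traceable graph with at
least `m` vertices contains a copy of `K_{2,2}` or a chordless `n`-path. -/
theorem finite_traceable_K22_or_chordless (n : ℕ) :
    ∃ m : ℕ, ∀ (V : Type) [Fintype V] (G : SimpleGraph V),
      m ≤ Fintype.card V → FinTraceable G →
      ContainsCopy G (completeBipartiteGraph (Fin 2) (Fin 2)) ∨ HasChordlessPath G n := by
  classical
  obtain ⟨N, hN⟩ := aux_ramsey (κ := Set (Fin (n + 1) × Fin (n + 1))) 4 (n + 8)
  refine ⟨N + 1, fun V _ G hcard hT => ?_⟩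
  obtain ⟨T, hT⟩ := hT
  by_contra hcon
  push Not at hcon
  have hpos : 0 < Fintype.card V := by omega
  refine aux_main G n (Fintype.card V) hcon.2 hcon.1
    (fun i => if h : i < Fintype.card V then T ⟨i, h⟩ else T ⟨0, hpos⟩) ?_ ?_ ?_
  · intro i hi
    have hi' : i < Fintype.card V := by omega
    simp only [hi, hi', dif_pos]
    exact hT i hi
  · intro i j hi hj h
    simp only [hi, hj, dif_pos] at h
    simpa using T.injective h
  · exact hN (Finset.range (Fintype.card V)) (by simp; omega)
end

section
/- There is a constant c > 0 such that for every n ≥ 2, every finite traceable graph with at least t_{c⌈log₂ n⌉}(2) vertices either contains a subgraph isomorphic to K_{2,2} or contains a chordless n-path, where the tower function is defined by t₁(x) = x and t_k(x) = 2^{t_{k−1}(x)} for k > 1. -/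
/-- The tower function: `tower 1 x = x` and `tower k x = 2 ^ tower (k-1) x` for `k > 1`. -/
def tower : ℕ → ℕ → ℕ
  | 0, x => x
  | 1, x => x
  | (k + 2), x => 2 ^ tower (k + 1) x

/-- Bound for end-homogeneous sets. -/
def ehBound : ℕ → ℕ → ℕ
  | _, 0 => 0
  | r, (M + 1) => r * (ehBound (r * r) M + 1)

theorem exists_endHomogeneous (M : ℕ) : ∀ (C : Type) [Fintype C] (f : List ℕ → C) (A : Finset ℕ),
    ehBound (Fintype.card C) M ≤ A.card → ∃ H ⊆ A, H.card = M ∧ ∃ f' : List ℕ → C,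
      ∀ x T, (x :: T).Pairwise (· > ·) → (∀ y ∈ x :: T, y ∈ H) → f (x :: T) = f' T := by
  classical
  induction M with
  | zero =>
    intro C _ f A _
    exact ⟨∅, by simp, by simp, f, by intro x T _ h; exact absurd (h x (by simp)) (by simp)⟩
  | succ M ih =>
    intro C _ f A hA
    have hne : (Finset.univ : Finset C).Nonempty := ⟨f [], Finset.mem_univ _⟩
    obtain ⟨c0, -, hc0⟩ := Finset.exists_le_card_fiber_of_mul_le_card_of_maps_to
      (s := A) (t := (Finset.univ : Finset C)) (f := fun x => f [x])
      (n := ehBound (Fintype.card C * Fintype.card C) M + 1) (by simp) hne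
      (by simpa [ehBound] using hA)
    set A0 := A.filter (fun x => f [x] = c0) with hA0
    have hA0ne : A0.Nonempty := by
      rw [← Finset.card_pos]; omega
    set a := A0.min' hA0ne with ha
    have haA : a ∈ A0 := Finset.min'_mem _ _
    have hamin : ∀ y ∈ A0, a ≤ y := fun y hy => Finset.min'_le _ _ hy
    obtain ⟨H', hH'A, hH'c, g', hg'⟩ := ih (C × C) (fun T => (f T, f (T ++ [a]))) (A0.erase a)
      (by rw [Finset.card_erase_of_mem haA, Fintype.card_prod]; omega)
    have haH' : a ∉ H' := fun h => by simpa using hH'A h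
    have hH'0 : ∀ y ∈ H', y ∈ A0 := fun y hy => Finset.mem_of_mem_erase (hH'A hy)
    refine ⟨insert a H', ?_, by rw [Finset.card_insert_of_notMem haH', hH'c],
      fun T => if T = [] then c0 else if a ∈ T then (g' T.dropLast).2 else (g' T).1, ?_⟩
    · intro y hy
      rcases Finset.mem_insert.1 hy with rfl | hy
      · exact (Finset.mem_filter.1 haA).1
      · exact (Finset.mem_filter.1 (hH'0 y hy)).1
    · intro x T hp hm
      have hm0 : ∀ y ∈ x :: T, y ∈ A0 := by
        intro y hy
        rcases Finset.mem_insert.1 (hm y hy) with h | h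
        · rw [h]; exact haA
        · exact hH'0 y h
      have hmH : ∀ y ∈ x :: T, y ≠ a → y ∈ H' := fun y hy hya =>
        (Finset.mem_insert.1 (hm y hy)).resolve_left hya
      by_cases hT : T = []
      · subst hT
        simpa using (Finset.mem_filter.1 (hm0 x (by simp))).2
      · simp only [hT, if_false]
        rw [List.pairwise_cons] at hp
        have hxa : x ≠ a := by
          obtain ⟨y, hy⟩ := List.exists_mem_of_ne_nil T hT
          have h1 := hp.1 y hy
          have h2 := hamin y (hm0 y (by simp [hy]))
          omega
        by_cases haT : a ∈ T
        · simp only [haT, if_true]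
          obtain ⟨T', l, rfl⟩ : ∃ T' l, T = T' ++ [l] :=
            ⟨T.dropLast, T.getLast hT, (List.dropLast_append_getLast hT).symm⟩
          have hpa := List.pairwise_append.1 hp.2
          have hl : l = a := by
            rcases List.mem_append.1 haT with h | h
            · have h1 := hpa.2.2 a h l (by simp)
              have h2 := hamin l (hm0 l (by simp))
              omega
            · exact (List.mem_singleton.1 h).symm
          rw [hl] at hp hm hm0 hmH hpa ⊢
          have key := hg' x T' (by
            rw [List.pairwise_cons]
            exact ⟨fun y hy => hp.1 y (by simp [hy]), hpa.1⟩) (by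
            intro y hy
            rcases List.mem_cons.1 hy with rfl | hy
            · exact hmH _ (by simp) hxa
            · have h1 := hpa.2.2 y hy a (by simp)
              exact hmH y (by simp [hy]) (by omega))
          have := congrArg Prod.snd key
          simpa using this
        · simp only [haT, if_false]
          have key := hg' x T (by rw [List.pairwise_cons]; exact hp) (by
            intro y hy
            refine hmH y hy ?_
            rintro rfl
            rcases List.mem_cons.1 hy with h | h
            · exact hxa h.symm
            · exact haT h)
          exact congrArg Prod.fst key

theorem ehBound_le (M : ℕ) : ∀ r, 2 ≤ r → ehBound r M + 1 ≤ r ^ (2 ^ (M + 1) - 2) := by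
  induction M with
  | zero => intro r _; simp [ehBound]
  | succ M ih =>
    intro r hr
    have h := ih (r * r) (by nlinarith)
    have e : 2 ^ (M + 1 + 1) - 2 = 2 * (2 ^ (M + 1) - 2) + 2 := by
      have : 2 ≤ 2 ^ (M + 1) := by
        rw [pow_succ]; have := Nat.one_le_two_pow (n := M); omega
      rw [pow_succ 2 (M + 1)]; omega
    rw [← pow_two, ← pow_mul] at h
    rw [e, pow_add]
    have hpos : 1 ≤ r ^ (2 * (2 ^ (M + 1) - 2)) := Nat.one_le_pow _ _ (by omega)
    generalize r ^ (2 * (2 ^ (M + 1) - 2)) = X at *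
    simp only [ehBound, ← pow_two]
    generalize ehBound (r ^ 2) M + 1 = Y at *
    calc r * Y + 1 ≤ r * X + 1 := by gcongr
      _ ≤ r * X + X := by omega
      _ = X * (r + 1) := by ring
      _ ≤ X * r ^ 2 := by gcongr; nlinarith

/-- iterated exponential -/
def pw4 (x : ℕ) : ℕ := 2 ^ 2 ^ 2 ^ 2 ^ x

theorem le_pw4 (x : ℕ) : x ≤ pw4 x := by
  have h : ∀ y : ℕ, y ≤ 2 ^ y := fun y => Nat.lt_two_pow_self.le
  unfold pw4
  exact (h x).trans ((h _).trans ((h _).trans (h _)))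

theorem ehBound_le_pw4 (r M : ℕ) (hr : 2 ≤ r) (hM : r ≤ M) : ehBound r M ≤ pw4 M := by
  have h1 := ehBound_le M r hr
  have h2 : r ^ (2 ^ (M + 1) - 2) ≤ r ^ (2 ^ (M + 1)) := Nat.pow_le_pow_right (by omega) (Nat.sub_le _ _)
  have h3 : r ≤ 2 ^ M := hM.trans Nat.lt_two_pow_self.le
  have h4 : r ^ (2 ^ (M + 1)) ≤ (2 ^ M) ^ (2 ^ (M + 1)) := Nat.pow_le_pow_left h3 _
  have h5 : M * 2 ^ (M + 1) ≤ 2 ^ 2 ^ 2 ^ M := by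
    have : M ≤ 2 ^ M := Nat.lt_two_pow_self.le
    have h6 : M + 1 ≤ 2 ^ M := Nat.lt_two_pow_self
    have h7 : 2 ^ M + 1 ≤ 2 ^ 2 ^ M := Nat.lt_two_pow_self
    calc M * 2 ^ (M + 1) ≤ 2 ^ M * 2 ^ (M + 1) := by gcongr
      _ = 2 ^ (M + (M + 1)) := (pow_add _ _ _).symm
      _ ≤ 2 ^ 2 ^ 2 ^ M := by
        apply Nat.pow_le_pow_right (by norm_num)
        have h8 : M + (M + 1) ≤ 2 ^ (M + 1) := by rw [pow_succ]; omega
        exact h8.trans (Nat.pow_le_pow_right (by norm_num) h6)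
  rw [← pow_mul] at h4
  have h6 : 2 ^ (M * 2 ^ (M + 1)) ≤ pw4 M := Nat.pow_le_pow_right (by norm_num) h5
  omega

theorem ramsey_four (C : Type) [Fintype C] (hC : 2 ≤ Fintype.card C) (m : ℕ)
    (hm : Fintype.card C ≤ m) (A : Finset ℕ) (hA : pw4 (pw4 (pw4 (pw4 m))) ≤ A.card)
    (f : List ℕ → C) :
    ∃ H ⊆ A, H.card = m ∧ ∃ k : C, ∀ a ∈ H, ∀ b ∈ H, ∀ c ∈ H, ∀ d ∈ H,
      a < b → b < c → c < d → f [d, c, b, a] = k := by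
  have l1 := le_pw4 m
  have l2 := le_pw4 (pw4 m)
  have l3 := le_pw4 (pw4 (pw4 m))
  obtain ⟨H1, s1, c1, f1, h1⟩ := exists_endHomogeneous (pw4 (pw4 (pw4 m))) C f A
    ((ehBound_le_pw4 _ _ hC (by omega)).trans hA)
  obtain ⟨H2, s2, c2, f2, h2⟩ := exists_endHomogeneous (pw4 (pw4 m)) C f1 H1
    ((ehBound_le_pw4 _ _ hC (by omega)).trans c1.ge)
  obtain ⟨H3, s3, c3, f3, h3⟩ := exists_endHomogeneous (pw4 m) C f2 H2
    ((ehBound_le_pw4 _ _ hC (by omega)).trans c2.ge)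
  obtain ⟨H4, s4, c4, f4, h4⟩ := exists_endHomogeneous m C f3 H3
    ((ehBound_le_pw4 _ _ hC (by omega)).trans c3.ge)
  refine ⟨H4, s4.trans (s3.trans (s2.trans s1)), c4, f4 [], ?_⟩
  intro a ha b hb c hc d hd hab hbc hcd
  have t3 : ∀ y ∈ H4, y ∈ H3 := fun y hy => s4 hy
  have t2 : ∀ y ∈ H4, y ∈ H2 := fun y hy => s3 (t3 y hy)
  have t1 : ∀ y ∈ H4, y ∈ H1 := fun y hy => s2 (t2 y hy)
  have hac := hab.trans hbc
  have hbd := hbc.trans hcd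
  have had := hab.trans hbd
  rw [h1 d [c, b, a] (by simp [*]) (by simp [*]), h2 c [b, a] (by simp [*]) (by simp [*]),
    h3 b [a] (by simp [*]) (by simp [*]), h4 a [] (by simp) (by simp [*])]

theorem tower_succ' (k : ℕ) : tower (k + 2) 2 = 2 ^ tower (k + 1) 2 := rfl

theorem lt_tower (k : ℕ) : k + 1 < tower (k + 1) 2 := by
  induction k with
  | zero => simp [tower]
  | succ k ih =>
    rw [tower_succ']
    have : tower (k + 1) 2 < 2 ^ tower (k + 1) 2 := Nat.lt_two_pow_self
    omega

theorem tower_mono {a b : ℕ} (h : a + 1 ≤ b + 1) : tower (a + 1) 2 ≤ tower (b + 1) 2 := by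
  induction b with
  | zero => have : a = 0 := by omega
            subst this; exact le_rfl
  | succ b ih =>
    rcases Nat.lt_or_ge a (b + 1) with h' | h'
    · exact (ih (by omega)).trans (by rw [tower_succ']; exact Nat.lt_two_pow_self.le)
    · have : a = b + 1 := by omega
      subst this; exact le_rfl

theorem pw4_mono {a b : ℕ} (h : a ≤ b) : pw4 a ≤ pw4 b := by
  unfold pw4
  have : (1 : ℕ) ≤ 2 := by norm_num
  gcongr

theorem pw4_tower (k : ℕ) : pw4 (tower (k + 1) 2) = tower (k + 5) 2 := rfl

theorem size_bound (n : ℕ) (hn : 2 ≤ n) :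
    pw4 (pw4 (pw4 (pw4 (n * n + 2 * n + 8)))) ≤ tower (40 * Nat.clog 2 n) 2 := by
  have h1 : n ≤ 2 ^ Nat.clog 2 n := Nat.le_pow_clog (by norm_num) n
  have h0 : 1 ≤ Nat.clog 2 n := Nat.clog_pos (by norm_num) hn
  generalize Nat.clog 2 n = L at *
  have h2 : n * n + 2 * n + 8 ≤ 2 ^ (2 * L + 4) := by
    have e : 2 ^ (2 * L + 4) = 16 * (2 ^ L * 2 ^ L) := by ring
    rw [e]; nlinarith
  have h3 : 2 ^ (2 * L + 4) ≤ tower (2 * L + 5) 2 := by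
    rw [show 2 * L + 5 = (2 * L + 3) + 2 by ring, tower_succ']
    exact Nat.pow_le_pow_right (by norm_num) (lt_tower _).le
  have h4 := h2.trans h3
  have h5 := pw4_mono (pw4_mono (pw4_mono (pw4_mono h4)))
  refine h5.trans ?_
  have e : pw4 (pw4 (pw4 (pw4 (tower (2 * L + 5) 2)))) = tower (2 * L + 20 + 1) 2 := rfl
  rw [e]
  obtain ⟨b, hb⟩ : ∃ b, 40 * L = b + 1 := ⟨40 * L - 1, by omega⟩
  rw [hb]
  exact tower_mono (by omega)

/-- Keep only the edges inside `S`. -/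
def restr {V : Type} (Γ : SimpleGraph V) (S : Set V) : SimpleGraph V where
  Adj i j := Γ.Adj i j ∧ i ∈ S ∧ j ∈ S
  symm := ⟨fun _ _ h => ⟨h.1.symm, h.2.2, h.2.1⟩⟩
  loopless := ⟨fun i h => Γ.loopless.irrefl i h.1⟩

theorem geodesic {V : Type} (Γ : SimpleGraph V) (S : Set V) (a b : V)
    (h : (restr Γ S).Reachable a b) :
    ∃ (d : ℕ) (v : ℕ → V), v 0 = a ∧ v d = b ∧ (∀ i < d, (restr Γ S).Adj (v i) (v (i + 1))) ∧
      ∀ n, 2 ≤ n → n ≤ d + 1 → HasChordlessPath Γ n := by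
  obtain ⟨p, hp⟩ := h.exists_walk_length_eq_dist
  refine ⟨p.length, p.getVert, p.getVert_zero, p.getVert_length,
    fun i hi => p.adj_getVert_succ hi, ?_⟩
  intro n hn hnd
  have hle : ∀ i j, i ≤ j → j ≤ p.length → (restr Γ S).Adj (p.getVert i) (p.getVert j) ∨
      p.getVert i = p.getVert j → j ≤ i + 1 ∧ (p.getVert i = p.getVert j → i = j) := by
    intro i j hij hj hadj
    have h1 : (p.take i).length = i := by rw [SimpleGraph.Walk.take_length]; omega
    have h2 : (p.drop j).length = p.length - j := by rw [SimpleGraph.Walk.drop_length]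
    constructor
    · rcases hadj with hadj | hadj
      · have := SimpleGraph.dist_le ((p.take i).append (SimpleGraph.Walk.cons hadj (p.drop j)))
        rw [SimpleGraph.Walk.length_append, SimpleGraph.Walk.length_cons] at this
        omega
      · have := SimpleGraph.dist_le ((p.take i).append ((p.drop j).copy hadj.symm rfl))
        rw [SimpleGraph.Walk.length_append, SimpleGraph.Walk.length_copy] at this
        omega
    · intro hadj
      have := SimpleGraph.dist_le ((p.take i).append ((p.drop j).copy hadj.symm rfl))
      rw [SimpleGraph.Walk.length_append, SimpleGraph.Walk.length_copy] at this
      omega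
  have hS : ∀ i ≤ p.length, p.getVert i ∈ S := by
    intro i hi
    rcases Nat.lt_or_ge i p.length with h | h
    · exact (p.adj_getVert_succ h).2.1
    · have : (i - 1) + 1 = i := by omega
      have h' := (p.adj_getVert_succ (show i - 1 < p.length by omega)).2.2
      rwa [this] at h'
  refine ⟨fun i => p.getVert i, ?_, ?_⟩
  · intro i j hij
    have hi := i.2
    have hj := j.2
    apply Fin.ext
    rcases le_total (i : ℕ) j with h | h
    · exact (hle i j h (by omega) (Or.inr hij)).2 hij
    · exact ((hle j i h (by omega) (Or.inr hij.symm)).2 hij.symm).symm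
  · intro i j
    have hi := i.2
    have hj := j.2
    constructor
    · intro hadj
      have hne : (i : ℕ) ≠ j := by
        intro h
        simp only [h] at hadj
        exact Γ.loopless.irrefl _ hadj
      have hr : (restr Γ S).Adj (p.getVert i) (p.getVert j) :=
        ⟨hadj, hS _ (by omega), hS _ (by omega)⟩
      rcases le_total (i : ℕ) j with h | h
      · have := (hle i j h (by omega) (Or.inl hr)).1
        omega
      · have := (hle j i h (by omega) (Or.inl hr.symm)).1
        omega
    · rintro (h | h)
      · have := (p.adj_getVert_succ (show (i : ℕ) < p.length by omega)).1
        rwa [h] at this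
      · have := (p.adj_getVert_succ (show (j : ℕ) < p.length by omega)).1
        rw [h] at this
        exact this.symm

theorem reach_of_steps {V : Type} (Γ : SimpleGraph V) (v : ℕ → V) (a b : ℕ) (hab : a ≤ b)
    (h : ∀ i, a ≤ i → i < b → Γ.Reachable (v i) (v (i + 1))) : Γ.Reachable (v a) (v b) := by
  induction b, hab using Nat.le_induction with
  | base => exact SimpleGraph.Reachable.refl _
  | succ b hb ih =>
    exact (ih (fun i h1 h2 => h i h1 (by omega))).trans (h b hb (by omega))

theorem restr_mono {V : Type} (Γ : SimpleGraph V) {S S' : Set V} (h : S ⊆ S') :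
    restr Γ S ≤ restr Γ S' := fun _ _ hh => ⟨hh.1, h hh.2.1, h hh.2.2⟩

theorem short_path (Γ : SimpleGraph ℕ) (N n : ℕ) (hn : 2 ≤ n)
    (hstep : ∀ i, i + 1 < N → Γ.Adj i (i + 1)) (hno : ¬ HasChordlessPath Γ n)
    (a b : ℕ) (hab : a < b) (hb : b < N) :
    ∃ p : Fin n → ℕ, (∀ i, a ≤ p i ∧ p i ≤ b) ∧ (restr Γ (Set.range p)).Reachable a b := by
  have hr : (restr Γ (Set.Icc a b)).Reachable a b := by
    refine reach_of_steps _ id a b hab.le ?_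
    intro i h1 h2
    apply SimpleGraph.Adj.reachable
    refine ⟨hstep i (by omega), ?_, ?_⟩ <;> simp <;> omega
  obtain ⟨d, v, v0, vd, hv, hc⟩ := geodesic Γ _ a b hr
  have hdn : d + 1 < n := by
    by_contra hcon
    exact hno (hc n hn (by omega))
  refine ⟨fun i => v (min i d), ?_, ?_⟩
  · intro i
    by_cases hi : min (i : ℕ) d < d
    · exact (hv _ hi).2.1
    · have : min (i : ℕ) d = d := by omega
      simp only [this, vd]
      omega
  · have := reach_of_steps (restr Γ (Set.range fun i : Fin n => v (min i d))) v 0 d (by omega) (by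
      intro i _ hi
      apply SimpleGraph.Adj.reachable
      refine ⟨(hv i hi).1, ⟨⟨i, by omega⟩, ?_⟩, ⟨⟨i + 1, by omega⟩, ?_⟩⟩
      · simp only; congr 1; omega
      · simp only; congr 1; omega)
    rwa [v0, vd] at this

theorem main_nat (Γ : SimpleGraph ℕ) (N n : ℕ) (hn : 2 ≤ n)
    (hstep : ∀ i, i + 1 < N → Γ.Adj i (i + 1))
    (hN : pw4 (pw4 (pw4 (pw4 (n * n + 2 * n + 8)))) ≤ N)
    (hno : ¬ HasChordlessPath Γ n) :
    ∃ a b c d : ℕ, a ≠ b ∧ c ≠ d ∧ Γ.Adj a c ∧ Γ.Adj a d ∧ Γ.Adj b c ∧ Γ.Adj b d := by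
  classical
  have hp : ∀ a b : ℕ, ∃ p : Fin n → ℕ, a < b → b < N →
      (∀ i, a ≤ p i ∧ p i ≤ b) ∧ (restr Γ (Set.range p)).Reachable a b := by
    intro a b
    by_cases h : a < b ∧ b < N
    · obtain ⟨p, hp⟩ := short_path Γ N n hn hstep hno a b h.1 h.2
      exact ⟨p, fun _ _ => hp⟩
    · exact ⟨fun _ => 0, fun h1 h2 => absurd ⟨h1, h2⟩ h⟩
  choose p hp using hp
  let f : List ℕ → Option (Fin n × Fin n) := fun l => match l with
    | [d, c, b, a] => if h : ∃ st : Fin n × Fin n, Γ.Adj (p a b st.1) (p c d st.2) then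
        some h.choose else none
    | _ => none
  have hcard : Fintype.card (Option (Fin n × Fin n)) = n * n + 1 := by simp
  obtain ⟨H, hHA, hHc, k, hk⟩ := ramsey_four (Option (Fin n × Fin n))
    (by rw [hcard]; nlinarith) (n * n + 2 * n + 8) (by rw [hcard]; omega) (Finset.range N)
    (by simpa using hN) f
  set m := n * n + 2 * n + 8 with hm
  obtain ⟨e, he, heH⟩ : ∃ e : ℕ → ℕ, (∀ i j, i < j → j < m → e i < e j) ∧ ∀ i < m, e i ∈ H := by
    refine ⟨fun i => if h : i < m then H.orderEmbOfFin hHc ⟨i, h⟩ else 0, ?_, ?_⟩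
    · intro i j hij hj
      have hi : i < m := by omega
      simp only [hi, hj, dif_pos]
      exact (H.orderEmbOfFin hHc).strictMono hij
    · intro i hi
      simp only [hi, dif_pos]
      exact Finset.orderEmbOfFin_mem _ _ _
  have heN : ∀ i < m, e i < N := fun i hi => Finset.mem_range.1 (hHA (heH i hi))
  have hke : ∀ i j k' l, i < j → j < k' → k' < l → l < m → f [e l, e k', e j, e i] = k := by
    intro i j k' l h1 h2 h3 h4
    exact hk _ (heH i (by omega)) _ (heH j (by omega)) _ (heH k' (by omega)) _ (heH l h4)
      (he _ _ h1 (by omega)) (he _ _ h2 (by omega)) (he _ _ h3 h4)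
  have hm8 : 8 ≤ m := by omega
  rcases k with _ | ⟨s, t⟩
  · exfalso
    have hnone : ∀ i j, i + 1 < j → j + 1 < m → ∀ s t,
        ¬ Γ.Adj (p (e i) (e (i + 1)) s) (p (e j) (e (j + 1)) t) := by
      intro i j h1 h2 s t hadj
      have := hke i (i + 1) j (j + 1) (by omega) h1 (by omega) h2
      simp only [f] at this
      rw [dif_pos ⟨(s, t), hadj⟩] at this
      simp at this
    let U : Set ℕ := {u | ∃ i, i + 1 < m ∧ u ∈ Set.range (p (e i) (e (i + 1)))}
    have hr : (restr Γ U).Reachable (e 0) (e (m - 1)) := by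
      refine reach_of_steps _ e 0 (m - 1) (by omega) ?_
      intro i _ hi
      refine (hp (e i) (e (i + 1)) (he _ _ (by omega) (by omega)) (heN _ (by omega))).2.mono ?_
      exact restr_mono Γ (fun u hu => ⟨i, by omega, hu⟩)
    obtain ⟨d, v, v0, vd, hv, hc⟩ := geodesic Γ _ _ _ hr
    have hdn : d + 1 < n := by
      by_contra hcon
      exact hno (hc n hn (by omega))
    have hlev : ∀ i ≤ d, v i ≤ e (2 * i) := by
      intro i
      induction i with
      | zero => intro _; rw [v0]
      | succ i ih =>
        intro hi
        have hvi := ih (by omega)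
        obtain ⟨hadj, ⟨x, hx, s, hs⟩, ⟨y, hy, t, ht⟩⟩ := hv i (by omega)
        have bx := (hp (e x) (e (x + 1)) (he _ _ (by omega) (by omega)) (heN _ (by omega))).1 s
        have bY := (hp (e y) (e (y + 1)) (he _ _ (by omega) (by omega)) (heN _ (by omega))).1 t
        have hxi : x ≤ 2 * i := by
          by_contra hcon
          have := he (2 * i) x (by omega) (by omega)
          omega
        have hyx : y ≤ x + 1 := by
          by_contra hcon
          refine hnone x y (by omega) hy s t ?_
          rw [hs, ht]; exact hadj
        have h3 : e (y + 1) ≤ e (2 * (i + 1)) := by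
          rcases Nat.lt_or_ge (y + 1) (2 * (i + 1)) with h | h
          · exact (he _ _ h (by omega)).le
          · have : y + 1 = 2 * (i + 1) := by omega
            rw [this]
        omega
    have h1 := hlev d le_rfl
    have h2 := he (2 * d) (m - 1) (by omega) (by omega)
    omega
  · have hsome : ∀ i j k' l, i < j → j < k' → k' < l → l < m →
        Γ.Adj (p (e i) (e j) s) (p (e k') (e l) t) := by
      intro i j k' l h1 h2 h3 h4
      have := hke i j k' l h1 h2 h3 h4
      simp only [f] at this
      split_ifs at this with h
      have h5 := h.choose_spec
      rw [Option.some.inj this] at h5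
      exact h5
    have hb : ∀ i j, i < j → j < m → ∀ s, e i ≤ p (e i) (e j) s ∧ p (e i) (e j) s ≤ e j :=
      fun i j hij hj => (hp _ _ (he _ _ hij hj) (heN _ hj)).1
    refine ⟨p (e 0) (e 1) s, p (e 2) (e 3) s, p (e 4) (e 5) t, p (e 6) (e 7) t, ?_, ?_,
      hsome _ _ _ _ (by omega) (by omega) (by omega) (by omega),
      hsome _ _ _ _ (by omega) (by omega) (by omega) (by omega),
      hsome _ _ _ _ (by omega) (by omega) (by omega) (by omega),
      hsome _ _ _ _ (by omega) (by omega) (by omega) (by omega)⟩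
    · have h1 := (hb 0 1 (by omega) (by omega) s).2
      have h2 := (hb 2 3 (by omega) (by omega) s).1
      have h3 := he 1 2 (by omega) (by omega)
      omega
    · have h1 := (hb 4 5 (by omega) (by omega) t).2
      have h2 := (hb 6 7 (by omega) (by omega) t).1
      have h3 := he 5 6 (by omega) (by omega)
      omega

/-- There is a constant `c > 0` such that for every `n ≥ 2`, every finite traceable
graph with at least `t_{c⌈log₂ n⌉}(2)` vertices contains a copy of `K_{2,2}` or a
chordless `n`-path. -/
theorem finite_traceable_K22_or_chordless_tower_bound :
    ∃ c : ℕ, 0 < c ∧ ∀ n : ℕ, 2 ≤ n →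
      ∀ (V : Type) [Fintype V] (G : SimpleGraph V),
        tower (c * Nat.clog 2 n) 2 ≤ Fintype.card V → FinTraceable G →
        ContainsCopy G (completeBipartiteGraph (Fin 2) (Fin 2)) ∨ HasChordlessPath G n := by
  classical
  refine ⟨40, by norm_num, ?_⟩
  intro n hn V _ G hcard htr
  obtain ⟨T, hT⟩ := htr
  by_cases hno : HasChordlessPath G n
  · exact Or.inr hno
  left
  let Γ : SimpleGraph ℕ :=
    { Adj := fun i j => ∃ (hi : i < Fintype.card V) (hj : j < Fintype.card V),
        G.Adj (T ⟨i, hi⟩) (T ⟨j, hj⟩)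
      symm := ⟨fun _ _ ⟨hi, hj, h⟩ => ⟨hj, hi, h.symm⟩⟩
      loopless := ⟨fun _ ⟨_, _, h⟩ => G.loopless.irrefl _ h⟩ }
  have hnoΓ : ¬ HasChordlessPath Γ n := by
    rintro ⟨v, hvi, hva⟩
    apply hno
    have hlt : ∀ i, v i < Fintype.card V := by
      intro i
      have hi := i.2
      by_cases h : (i : ℕ) + 1 < n
      · obtain ⟨h1, _, _⟩ := (hva i ⟨i + 1, h⟩).2 (Or.inl rfl)
        exact h1
      · obtain ⟨h1, _, _⟩ := (hva i ⟨i - 1, by omega⟩).2 (Or.inr (by simp only; omega))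
        exact h1
    refine ⟨fun i => T ⟨v i, hlt i⟩, ?_, ?_⟩
    · intro i j hij
      have := T.injective hij
      exact hvi (by simpa using this)
    · intro i j
      rw [← hva i j]
      exact ⟨fun h => ⟨hlt i, hlt j, h⟩, fun ⟨_, _, h⟩ => h⟩
  obtain ⟨a, b, c, d, hab, hcd, ⟨ha, hc, hac⟩, ⟨_, hd, had⟩, ⟨hb, _, hbc⟩, ⟨_, _, hbd⟩⟩ :=
    main_nat Γ (Fintype.card V) n hn (fun i hi => ⟨by omega, hi, hT i hi⟩)
      ((size_bound n hn).trans hcard) hnoΓ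
  have e1 : T ⟨a, ha⟩ ≠ T ⟨b, hb⟩ := fun h => hab (by simpa using T.injective h)
  have e2 : T ⟨c, hc⟩ ≠ T ⟨d, hd⟩ := fun h => hcd (by simpa using T.injective h)
  refine ⟨Sum.elim ![T ⟨a, ha⟩, T ⟨b, hb⟩] ![T ⟨c, hc⟩, T ⟨d, hd⟩], ?_, ?_⟩
  · rintro (i | i) (j | j) h <;> fin_cases i <;> fin_cases j <;>
      simp_all [hac.ne, had.ne, hbc.ne, hbd.ne, hac.ne', had.ne', hbc.ne', hbd.ne', e1.symm, e2.symm]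
  · rintro (i | i) (j | j) h <;> fin_cases i <;> fin_cases j <;>
      simp_all [hac.symm, had.symm, hbc.symm, hbd.symm]
end

section
/- Let G be a graph whose vertex set is {0, 1, …, N−1} with i adjacent to i+1 for every i < N−1, let n ≥ 2, and suppose G contains no chordless n-path. Then for all vertices x < y there exist vertices x = a₀ < a₁ < ⋯ < a_k = y with 1 ≤ k ≤ n−2 such that a₀, a₁, …, a_k is a chordless path in G (i.e., a_i and a_j are adjacent if and only if |i − j| = 1). -/
/-- If `G` is a graph on `{0, …, N-1}` with `i` adjacent to `i+1`, `n ≥ 2`, and `G`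
has no chordless `n`-path, then any two vertices `x < y` are joined by an increasing
chordless path `x = a₀ < a₁ < ⋯ < a_k = y` with `1 ≤ k ≤ n - 2`. -/
theorem increasing_chordless_path_between {N : ℕ} (G : SimpleGraph (Fin N))
    (hpath : ∀ (i : ℕ) (h : i + 1 < N), G.Adj ⟨i, Nat.lt_of_succ_lt h⟩ ⟨i + 1, h⟩)
    (n : ℕ) (hn : 2 ≤ n) (hG : ¬ HasChordlessPath G n) :
    ∀ x y : Fin N, x < y →
      ∃ k : ℕ, 1 ≤ k ∧ k ≤ n - 2 ∧
        ∃ a : Fin (k + 1) → Fin N, StrictMono a ∧ a 0 = x ∧ a (Fin.last k) = y ∧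
          ∀ i j : Fin (k + 1), G.Adj (a i) (a j) ↔
            ((i : ℕ) + 1 = (j : ℕ) ∨ (j : ℕ) + 1 = (i : ℕ)) := by
  classical
  intro x y hxy
  have hex : ∃ k : ℕ, ∃ a : ℕ → Fin N, a 0 = x ∧ a k = y ∧
      ∀ i < k, a i < a (i + 1) ∧ G.Adj (a i) (a (i + 1)) := by
    have hxy' : (x : ℕ) < y := hxy
    have hy := y.isLt
    refine ⟨(y : ℕ) - x, fun i => ⟨min ((x : ℕ) + i) y, by omega⟩, ?_, ?_, ?_⟩
    · ext; simp; omega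
    · ext; simp; omega
    · intro i hi
      have e1 : min ((x : ℕ) + i) y = x + i := by omega
      have e2 : min ((x : ℕ) + (i + 1)) y = x + i + 1 := by omega
      constructor
      · rw [Fin.lt_def]
        show min ((x : ℕ) + i) y < min ((x : ℕ) + (i + 1)) y
        omega
      · have := hpath (x + i) (by omega)
        simpa only [e1, e2] using this
  obtain ⟨k, ⟨a, h0, hk, hs⟩, hmin⟩ : ∃ k : ℕ, (∃ a : ℕ → Fin N, a 0 = x ∧ a k = y ∧
      ∀ i < k, a i < a (i + 1) ∧ G.Adj (a i) (a (i + 1))) ∧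
      ∀ m < k, ¬ ∃ a : ℕ → Fin N, a 0 = x ∧ a m = y ∧
      ∀ i < m, a i < a (i + 1) ∧ G.Adj (a i) (a (i + 1)) :=
    ⟨Nat.find hex, Nat.find_spec hex, fun m hm => Nat.find_min hex hm⟩
  have hk1 : 1 ≤ k := by
    rcases Nat.eq_zero_or_pos k with h | h
    · subst h
      rw [← h0, ← hk] at hxy
      exact absurd hxy (lt_irrefl _)
    · exact h
  have hmono : ∀ j ≤ k, ∀ i < j, a i < a j := by
    intro j
    induction j with
    | zero => intro _ i hi; omega
    | succ j ih =>
      intro hj i hi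
      have h1 := (hs j (by omega)).1
      rcases Nat.lt_succ_iff_lt_or_eq.mp hi with h | h
      · exact (ih (by omega) i h).trans h1
      · subst h; exact h1
  have hno : ∀ i j, i + 1 < j → j ≤ k → ¬ G.Adj (a i) (a j) := by
    intro i j hij hj hadj
    refine hmin (k - (j - i - 1)) (by omega)
      ⟨fun t => if t ≤ i then a t else a (t + (j - i - 1)), ?_, ?_, ?_⟩
    · simpa using h0
    · have e1 : ¬ (k - (j - i - 1) ≤ i) := by omega
      have e2 : k - (j - i - 1) + (j - i - 1) = k := by omega
      simp only [e1, if_false, e2, hk]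
    · intro t ht
      rcases lt_trichotomy t i with h | h | h
      · have e1 : t ≤ i := by omega
        have e2 : t + 1 ≤ i := by omega
        simp only [e1, e2, if_true]
        exact hs t (by omega)
      · subst h
        have e2 : ¬ (t + 1 ≤ t) := by omega
        have e3 : t + 1 + (j - t - 1) = j := by omega
        simp only [le_refl, e2, if_true, if_false, e3]
        exact ⟨hmono j hj t (by omega), hadj⟩
      · have e1 : ¬ (t ≤ i) := by omega
        have e2 : ¬ (t + 1 ≤ i) := by omega
        have e3 : t + 1 + (j - i - 1) = t + (j - i - 1) + 1 := by omega
        simp only [e1, e2, if_false, e3]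
        exact hs _ (by omega)
  have hlt : ∀ i j, i < j → j ≤ k → (G.Adj (a i) (a j) ↔ i + 1 = j) := by
    intro i j hij hj
    constructor
    · intro h
      by_contra hne
      exact hno i j (by omega) hj h
    · intro h
      subst h
      exact (hs i (by omega)).2
  have hadj : ∀ i j, i ≤ k → j ≤ k → (G.Adj (a i) (a j) ↔ (i + 1 = j ∨ j + 1 = i)) := by
    intro i j hi hj
    rcases lt_trichotomy i j with h | h | h
    · rw [hlt i j h hj]; omega
    · subst h
      simp
    · rw [G.adj_comm, hlt j i h hi]; omega
  refine ⟨k, hk1, ?_, fun i => a i, ?_, by simpa using h0, by simpa using hk, ?_⟩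
  · by_contra hcon
    apply hG
    refine ⟨fun i => a i, ?_, ?_⟩
    · intro i j hij
      have hi := i.isLt
      have hj := j.isLt
      simp only at hij
      rcases lt_trichotomy (i : ℕ) j with h | h | h
      · exact absurd hij (hmono j (by omega) i h).ne
      · exact Fin.ext h
      · exact absurd hij (hmono i (by omega) j h).ne'
    · intro i j
      have hi := i.isLt
      have hj := j.isLt
      exact hadj i j (by omega) (by omega)
  · intro i j hij
    have hj := j.isLt
    exact hmono j (by omega) i hij
  · intro i j
    have hi := i.isLt
    have hj := j.isLt
    exact hadj i j (by omega) (by omega)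
end

section
/- Every finitely generated infinite lattice of length 3 contains arbitrarily long finite fences; that is, for every odd n there exist elements x₀, x₁, …, x_n of the lattice such that x₀ < x₁, for each even i with 0 < i < n one has x_i < x_{i−1} and x_i < x_{i+1}, and no comparability relations hold among x₀, …, x_n other than these. -/
/-- The generated sets: `latGen S 0 = S` and `latGen S (n+1)` is the set of all meets
and joins of pairs of elements of `latGen S n`. (Here `latGen S 0` plays the role of
`F₁` and `latGen S n` the role of `F_{n+1}`.) -/
def latGen {L : Type*} [Lattice L] (S : Set L) : ℕ → Set L
  | 0 => S
  | n + 1 => {z | ∃ x ∈ latGen S n, ∃ y ∈ latGen S n, z = x ⊓ y ∨ z = x ⊔ y}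

/-- A lattice is finitely generated if some finite subset generates every element via
iterated meets and joins. -/
def LatticeFG (L : Type*) [Lattice L] : Prop :=
  ∃ S : Set L, S.Finite ∧ ∀ x : L, ∃ n : ℕ, x ∈ latGen S n

/-- `L` contains a fence of length `n`: elements `x₀, …, x_n` with `x₀ < x₁`, with
`x_i < x_{i-1}` and `x_i < x_{i+1}` for each even `i` with `0 < i < n`, and no other
comparabilities among the `x_i`. -/
def ContainsFence (L : Type*) [Lattice L] (n : ℕ) : Prop :=
  ∃ x : ℕ → L, x 0 < x 1 ∧
    (∀ i : ℕ, 0 < i → i < n → i % 2 = 0 → x i < x (i - 1) ∧ x i < x (i + 1)) ∧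
    (∀ i j : ℕ, i ≤ n → j ≤ n → i ≠ j →
      ((x i ≤ x j ∨ x j ≤ x i) ↔ (i + 1 = j ∨ j + 1 = i)))

theorem aux_path (A : ℕ → ℕ → Prop) (hs : ∀ i j, A i j → A j i) (K : ℕ)
    (h1 : ∀ i, i < K → A i (i+1))
    (h2 : ∀ i j l, i ≤ K → j + 2 ≤ i → l + 2 ≤ i → A i j → A i l → j = l) :
    ∀ n a b, b ≤ K → a + 2 ^ (n+1) ≤ b + 2 → a ≤ b → ∃ p : ℕ → ℕ, p 0 = b ∧
      (∀ i, i ≤ n → a ≤ p i ∧ p i ≤ b) ∧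
      (∀ i j, i < j → j ≤ n → p j < p i ∧ (A (p i) (p j) ↔ i + 1 = j)) := by
  intro n
  induction n with
  | zero =>
    intro a b hb h hab
    refine ⟨fun _ => b, rfl, fun i _ => ⟨hab, le_rfl⟩, fun i j h h' => by omega⟩
  | succ n ih =>
    intro a b hb h hab
    have hpos : 1 ≤ 2 ^ n := Nat.one_le_two_pow
    have e1 : 2 ^ (n+1) = 2 * 2 ^ n := by ring
    have e2 : 2 ^ (n+1+1) = 4 * 2 ^ n := by ring
    -- key: reduce to an interval [a', b'] with b adjacent only to b'
    have key : ∃ a' b', a ≤ a' ∧ b' < b ∧ a' + 2 ^ (n+1) ≤ b' + 2 ∧ a' ≤ b' ∧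
        ∀ c, a' ≤ c → c ≤ b' → (A b c ↔ c = b') := by
      have hb1 : A b (b-1) := by
        have := h1 (b-1) (by omega)
        rw [show b - 1 + 1 = b by omega] at this
        exact hs _ _ this
      by_cases hf : ∃ f, a ≤ f ∧ f + 2 ≤ b ∧ A b f
      · obtain ⟨f, hf1, hf2, hf3⟩ := hf
        by_cases hc : (f + 1) + 2 ^ (n+1) ≤ (b - 1) + 2
        · refine ⟨f+1, b-1, by omega, by omega, hc, by omega, fun c hc1 hc2 => ⟨fun hA => ?_, fun hA => hA ▸ hb1⟩⟩
          by_contra hne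
          have := h2 b c f hb (by omega) hf2 hA hf3
          omega
        · refine ⟨a, f, le_rfl, by omega, by omega, hf1, fun c hc1 hc2 => ⟨fun hA => ?_, fun hA => hA ▸ hf3⟩⟩
          exact h2 b c f hb (by omega) hf2 hA hf3
      · refine ⟨a, b-1, le_rfl, by omega, by omega, by omega, fun c hc1 hc2 => ⟨fun hA => ?_, fun hA => hA ▸ hb1⟩⟩
        by_contra hne
        exact hf ⟨c, hc1, by omega, hA⟩
    obtain ⟨a', b', ha, hb', hl, hab', hA⟩ := key
    obtain ⟨p, p0, p1, p2⟩ := ih a' b' (by omega) hl hab'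
    refine ⟨fun i => Nat.casesOn i b p, rfl, ?_, ?_⟩
    · rintro (_ | i) hi
      · exact ⟨hab, le_rfl⟩
      · have := p1 i (by omega)
        simp only
        omega
    · rintro (_ | i) (_ | j) hij hj
      · omega
      · have hj' := p1 j (by omega)
        refine ⟨show p j < b by omega, ?_⟩
        change A b (p j) ↔ 0 + 1 = j + 1
        rw [hA _ hj'.1 hj'.2]
        constructor
        · intro h
          by_contra hne
          have := (p2 0 j (by omega) (by omega)).1
          omega
        · intro h
          have : j = 0 := by omega
          rw [this, p0]
      · omega
      · have := p2 i j (by omega) (by omega)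
        refine ⟨this.1, ?_⟩
        simp only
        rw [this.2]
        omega

theorem aux_latGen_mono {L : Type*} [Lattice L] (S : Set L) {m n : ℕ} (h : m ≤ n) :
    latGen S m ⊆ latGen S n := by
  induction h with
  | refl => exact subset_rfl
  | step _ ih => exact fun x hx => ⟨x, ih hx, x, ih hx, Or.inl (by simp)⟩

theorem aux_latGen_mono_set {L : Type*} [Lattice L] {S T : Set L} (h : S ⊆ T) (n : ℕ) :
    latGen S n ⊆ latGen T n := by
  induction n with
  | zero => exact h
  | succ n ih =>
    rintro z ⟨x, hx, y, hy, hz⟩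
    exact ⟨x, ih hx, y, ih hy, hz⟩

theorem aux_latGen_finite {L : Type*} [Lattice L] {S : Set L} (h : S.Finite) (n : ℕ) :
    (latGen S n).Finite := by
  induction n with
  | zero => exact h
  | succ n ih =>
    refine ((Set.Finite.image2 (fun x y => x ⊓ y) ih ih).union
      (Set.Finite.image2 (fun x y => x ⊔ y) ih ih)).subset ?_
    rintro z ⟨x, hx, y, hy, rfl | rfl⟩
    · exact Or.inl ⟨x, hx, y, hy, rfl⟩
    · exact Or.inr ⟨x, hx, y, hy, rfl⟩

theorem aux_new {L : Type*} [Lattice L] [Infinite L] {S : Set L} (h : S.Finite)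
    (hS : ∀ x : L, ∃ n : ℕ, x ∈ latGen S n) (k : ℕ) :
    ∃ x, x ∈ latGen S (k+1) ∧ x ∉ latGen S k := by
  by_contra! hc
  have : ∀ m, latGen S m ⊆ latGen S k := by
    intro m
    induction m with
    | zero => exact aux_latGen_mono S (Nat.zero_le k)
    | succ m ih =>
      rintro z ⟨x, hx, y, hy, hz⟩
      exact hc z ⟨x, ih hx, y, ih hy, hz⟩
  obtain ⟨x, hx⟩ := (aux_latGen_finite h k).exists_notMem
  obtain ⟨n, hn⟩ := hS x
  exact hx (this n hn)

theorem aux_chain {L : Type*} [Lattice L] (S : Set L) (k : ℕ) :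
    ∀ x, x ∈ latGen S (k+1) → x ∉ latGen S k → ∃ v : ℕ → L, v k = x ∧
      (∀ i, i ≤ k → v i ∈ latGen S (i+1) ∧ v i ∉ latGen S i) ∧
      (∀ i, i < k → v i ≤ v (i+1) ∨ v (i+1) ≤ v i) := by
  induction k with
  | zero =>
    intro x hx hx'
    refine ⟨fun _ => x, rfl, fun i hi => ?_, fun i hi => by omega⟩
    obtain rfl : i = 0 := by omega
    exact ⟨hx, hx'⟩
  | succ k ih =>
    intro x hx hx'
    have : ∃ y, y ∈ latGen S (k+1) ∧ y ∉ latGen S k ∧ (y ≤ x ∨ x ≤ y) := by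
      obtain ⟨y, hy, z, hz, h⟩ := hx
      by_cases hyk : y ∈ latGen S k
      · by_cases hzk : z ∈ latGen S k
        · exact absurd ⟨y, hyk, z, hzk, h⟩ hx'
        · refine ⟨z, hz, hzk, ?_⟩
          rcases h with rfl | rfl
          · exact Or.inr inf_le_right
          · exact Or.inl le_sup_right
      · refine ⟨y, hy, hyk, ?_⟩
        rcases h with rfl | rfl
        · exact Or.inr inf_le_left
        · exact Or.inl le_sup_left
    obtain ⟨y, hy, hyk, hc⟩ := this
    obtain ⟨v, v0, v1, v2⟩ := ih y hy hyk
    refine ⟨fun i => if i = k + 1 then x else v i, by simp, ?_, ?_⟩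
    · intro i hi
      by_cases h : i = k + 1
      · subst h; simpa using ⟨hx, hx'⟩
      · simpa [h] using v1 i (by omega)
    · intro i hi
      by_cases h : i = k
      · subst h; simpa [v0] using hc
      · have h' : i ≠ k + 1 := by omega
        simpa [h, h'] using v2 i (by omega)

theorem aux_uniq {L : Type*} [Lattice L] [BoundedOrder L]
    (hno : ∀ a b c : L, a ≠ ⊥ → c ≠ ⊤ → a < b → b < c → False)
    (v y z : L) (hv0 : v ≠ ⊥) (hv1 : v ≠ ⊤) (hy0 : y ≠ ⊥) (hy1 : y ≠ ⊤) (hz0 : z ≠ ⊥) (hz1 : z ≠ ⊤)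
    (hvy : v ≠ y) (hvz : v ≠ z) (hyz : y ≠ z) (h1 : v ≤ y ∨ y ≤ v) (h2 : v ≤ z ∨ z ≤ v) :
    v = y ⊓ z ∨ v = y ⊔ z := by
  rcases h1 with h1 | h1 <;> rcases h2 with h2 | h2
  · left
    by_contra hne
    have hlt : v < y ⊓ z := lt_of_le_of_ne (le_inf h1 h2) hne
    rcases eq_or_lt_of_le (inf_le_left : y ⊓ z ≤ y) with h | h
    · have : y < z := lt_of_le_of_ne (inf_eq_left.mp h) hyz
      exact hno v y z hv0 hz1 (lt_of_le_of_ne h1 hvy) this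
    · exact hno _ _ _ hv0 hy1 hlt h
  · exact (hno z v y hz0 hy1 (lt_of_le_of_ne h2 hvz.symm) (lt_of_le_of_ne h1 hvy)).elim
  · exact (hno y v z hy0 hz1 (lt_of_le_of_ne h1 hvy.symm) (lt_of_le_of_ne h2 hvz)).elim
  · right
    by_contra hne
    have hlt : y ⊔ z < v := lt_of_le_of_ne (sup_le h1 h2) (Ne.symm hne)
    rcases eq_or_lt_of_le (le_sup_left : y ≤ y ⊔ z) with h | h
    · have : z < y := lt_of_le_of_ne (sup_eq_left.mp h.symm) hyz.symm
      exact hno z y v hz0 hv1 this (lt_of_le_of_ne h1 hvy.symm)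
    · exact hno _ _ _ hy0 hv1 h hlt

theorem aux_fence {L : Type*} [Lattice L] (n : ℕ) (hn : 1 ≤ n) (x : ℕ → L) (h01 : x 0 < x 1)
    (hd : ∀ i j, i < j → j ≤ n → x i ≠ x j ∧ ((x i ≤ x j ∨ x j ≤ x i) ↔ i + 1 = j)) :
    ContainsFence L n := by
  have alt : ∀ i, i < n → (i % 2 = 0 → x i < x (i+1)) ∧ (i % 2 = 1 → x (i+1) < x i) := by
    intro i
    induction i with
    | zero => intro _; exact ⟨fun _ => h01, fun h => by omega⟩
    | succ i ih =>
      intro hi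
      have ih := ih (by omega)
      have a1 := hd (i+1) (i+1+1) (by omega) (by omega)
      have a2 := hd i (i+1+1) (by omega) (by omega)
      have a3 := a1.2.mpr rfl
      have a4 : ¬ (x i ≤ x (i+1+1) ∨ x (i+1+1) ≤ x i) := fun h => by
        have := a2.2.mp h; omega
      push Not at a4
      constructor
      · intro h
        have ih := ih.2 (by omega)
        rcases a3 with a3 | a3
        · exact lt_of_le_of_ne a3 a1.1
        · exact absurd (a3.trans ih.le) a4.2
      · intro h
        have ih := ih.1 (by omega)
        rcases a3 with a3 | a3
        · exact absurd (ih.le.trans a3) a4.1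
        · exact lt_of_le_of_ne a3 a1.1.symm
  refine ⟨x, h01, ?_, ?_⟩
  · intro i h0 hi he
    refine ⟨?_, (alt i hi).1 he⟩
    have := (alt (i-1) (by omega)).2 (by omega)
    rwa [show i - 1 + 1 = i by omega] at this
  · intro i j hi hj hne
    rcases lt_or_gt_of_ne hne with h | h
    · rw [(hd i j h hj).2]; omega
    · rw [or_comm, (hd j i h hi).2]; omega

/-- Every finitely generated infinite lattice of length 3 contains arbitrarily long
finite fences. -/
theorem fg_infinite_length_three_lattice_fences {L : Type*} [Lattice L] [BoundedOrder L]
    [Infinite L] (hbot_top : (⊥ : L) ≠ ⊤)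
    (hlen : ∀ z : L, z ≠ ⊥ → z ≠ ⊤ → IsAtom z ∨ IsCoatom z)
    (hfg : LatticeFG L) :
    ∀ n : ℕ, Odd n → ContainsFence L n := by
  intro n hn
  have hn1 : 1 ≤ n := hn.pos
  have hno : ∀ a b c : L, a ≠ ⊥ → c ≠ ⊤ → a < b → b < c → False := by
    intro a b c ha hc hab hbc
    rcases hlen b (ne_bot_of_gt hab) (ne_top_of_lt hbc) with h | h
    · exact ha (h.2 a hab)
    · exact hc (h.2 c hbc)
  obtain ⟨S₀, hfin₀, hgen₀⟩ := hfg
  obtain ⟨S, hfin, hgen, hb, ht⟩ : ∃ S : Set L, S.Finite ∧ (∀ x : L, ∃ n : ℕ, x ∈ latGen S n) ∧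
      ⊥ ∈ S ∧ ⊤ ∈ S := by
    refine ⟨insert ⊥ (insert ⊤ S₀), (hfin₀.insert _).insert _, fun x => ?_, by simp, by simp⟩
    obtain ⟨m, hm⟩ := hgen₀ x
    exact ⟨m, aux_latGen_mono_set (by intro y hy; simp [hy]) m hm⟩
  obtain ⟨K, hK⟩ : ∃ K, K = 2 ^ (n + 1 + 1) := ⟨_, rfl⟩
  obtain ⟨x, hx, hx'⟩ := aux_new hfin hgen K
  obtain ⟨v, -, v1, v2⟩ := aux_chain S K x hx hx'
  have vb : ∀ i, i ≤ K → v i ≠ ⊥ := fun i hi h =>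
    (v1 i hi).2 (h ▸ aux_latGen_mono S (Nat.zero_le i) hb)
  have vt : ∀ i, i ≤ K → v i ≠ ⊤ := fun i hi h =>
    (v1 i hi).2 (h ▸ aux_latGen_mono S (Nat.zero_le i) ht)
  have vlt : ∀ i j, i < j → j ≤ K → v i ≠ v j := fun i j hij hj h =>
    (v1 j hj).2 (h ▸ aux_latGen_mono S hij (v1 i (by omega)).1)
  obtain ⟨p, -, p1, p2⟩ := aux_path (fun i j => v i ≤ v j ∨ v j ≤ v i) (fun i j h => h.symm) K v2
    (by
      intro i j l hi hj hl h h'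
      by_contra hne
      have hjl : v j ≠ v l := by
        rcases lt_or_gt_of_ne hne with h | h
        · exact vlt _ _ h (by omega)
        · exact (vlt _ _ h (by omega)).symm
      have := aux_uniq hno (v i) (v j) (v l) (vb _ hi) (vt _ hi) (vb _ (by omega)) (vt _ (by omega))
        (vb _ (by omega)) (vt _ (by omega)) (vlt j i (by omega) hi).symm
        (vlt l i (by omega) hi).symm hjl h h'
      obtain ⟨i, rfl⟩ : ∃ i', i = i' + 1 := ⟨i - 1, by omega⟩
      exact (v1 _ hi).2 ⟨v j, aux_latGen_mono S (by omega) (v1 j (by omega)).1,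
        v l, aux_latGen_mono S (by omega) (v1 l (by omega)).1, this⟩)
    (n+1) 0 K le_rfl (by omega) (by omega)
  have hd : ∀ i j, i < j → j ≤ n + 1 → v (p i) ≠ v (p j) ∧
      ((v (p i) ≤ v (p j) ∨ v (p j) ≤ v (p i)) ↔ i + 1 = j) := by
    intro i j hij hj
    have := p2 i j hij hj
    exact ⟨(vlt _ _ this.1 (p1 i (by omega)).2).symm, this.2⟩
  have d01 := hd 0 1 (by omega) (by omega)
  rcases d01.2.mpr rfl with h | h
  · exact aux_fence n hn1 (fun i => v (p i)) (lt_of_le_of_ne h d01.1)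
      (fun i j hij hj => hd i j hij (by omega))
  · have d12 := hd 1 2 (by omega) (by omega)
    have d02 := hd 0 2 (by omega) (by omega)
    refine aux_fence n hn1 (fun i => v (p (i+1))) ?_ ?_
    · rcases d12.2.mpr rfl with h' | h'
      · exact lt_of_le_of_ne h' d12.1
      · have := d02.2.mp (Or.inr (h'.trans h))
        omega
    · intro i j hij hj
      have := hd (i+1) (j+1) (by omega) (by omega)
      refine ⟨this.1, this.2.trans (by omega)⟩
end

section
/- Let L be a finitely generated infinite lattice of length 3. Then there exists an injective sequence f : ℕ → L such that f(n) ∉ {0_L, 1_L} for every n, f(n) and f(n+1) are comparable for every n, and the terms alternate between atoms and coatoms (i.e., either f(2n) is an atom and f(2n+1) is a coatom for all n, or f(2n) is a coatom and f(2n+1) is an atom for all n). -/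
lemma konig_aux {L : Type*} [Infinite L] (r : L → ℕ) (hr : ∀ n, {z | r z = n}.Finite)
    (p : L → L) (N : ℕ) (hp : ∀ z, N < r z → r (p z) + 1 = r z) :
    ∃ f : ℕ → L, ∀ n, r (f n) = N + n ∧ p (f (n + 1)) = f n := by
  let G : L → Set L := fun x => {z | r x ≤ r z ∧ p^[r z - r x] z = x}
  have hit : ∀ k z, N + k ≤ r z → r (p^[k] z) + k = r z := by
    intro k
    induction k with
    | zero => intro z _; rfl
    | succ k ih =>
      intro z hz
      have h1 := hp z (by omega)
      have h2 := ih (p z) (by omega)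
      rw [Function.iterate_succ_apply]
      omega
  have pig : ∀ (T : Set L) (m : ℕ), N ≤ m → T.Infinite → (∀ z ∈ T, m ≤ r z) →
      ∃ y, r y = m ∧ (G y ∩ T).Infinite := by
    intro T m hm hT h
    by_contra hcon
    push Not at hcon
    apply hT
    refine ((hr m).biUnion (t := fun y => G y ∩ T) (fun y hy => ?_)).subset ?_
    · simpa using hcon y hy
    · intro z hz
      have hz' := h z hz
      have h1 := hit (r z - m) z (by omega)
      have h2 : r (p^[r z - m] z) = m := by omega
      simp only [Set.mem_iUnion]
      refine ⟨p^[r z - m] z, h2, ⟨?_, ?_⟩, hz⟩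
      · omega
      · rw [h2]
  have step : ∀ x : {x // N ≤ r x ∧ (G x).Infinite},
      ∃ y : {x // N ≤ r x ∧ (G x).Infinite}, r y.1 = r x.1 + 1 ∧ p y.1 = x.1 := by
    rintro ⟨x, hx, hG⟩
    obtain ⟨y, hy, hyi⟩ := pig (G x \ {z | r z = r x}) (r x + 1) (by omega) (hG.sdiff (hr _)) (by
      rintro z ⟨⟨h1, -⟩, h2⟩
      have : r z ≠ r x := h2
      omega)
    refine ⟨⟨y, by omega, hyi.mono Set.inter_subset_left⟩, hy, ?_⟩
    obtain ⟨z, ⟨h1, h2⟩, ⟨h3, h4⟩, h5⟩ := hyi.nonempty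
    have e : r z - r x = (r z - r y) + 1 := by omega
    rw [e, Function.iterate_succ_apply', h2] at h4
    exact h4
  have hfin : ∀ n, {z | r z < n}.Finite := by
    intro n
    refine ((Set.finite_Iio n).biUnion (t := fun k => {z | r z = k}) (fun k _ => hr k)).subset ?_
    intro z hz
    simpa using hz
  obtain ⟨x0, hx0, hi0⟩ := pig (Set.univ \ {z | r z < N}) N le_rfl
    (Set.infinite_univ.sdiff (hfin N)) (by
      rintro z ⟨-, h⟩
      simpa using h)
  choose s hs using step
  let x0' : {x // N ≤ r x ∧ (G x).Infinite} := ⟨x0, by omega, hi0.mono Set.inter_subset_left⟩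
  refine ⟨fun n => (s^[n] x0').1, fun n => ⟨?_, ?_⟩⟩
  · induction n with
    | zero => exact hx0
    | succ n ih =>
      have h1 := (hs (s^[n] x0')).1
      simp only [Function.iterate_succ_apply'] at ih ⊢
      omega
  · simp only [Function.iterate_succ_apply']
    exact (hs _).2

lemma latGen_finite {L : Type*} [Lattice L] (S : Set L) (hS : S.Finite) (n : ℕ) :
    (latGen S n).Finite := by
  induction n with
  | zero => exact hS
  | succ n ih =>
    refine ((ih.image2 (· ⊓ ·) ih).union (ih.image2 (· ⊔ ·) ih)).subset ?_
    rintro z ⟨x, hx, y, hy, h | h⟩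
    · exact Or.inl ⟨x, hx, y, hy, h.symm⟩
    · exact Or.inr ⟨x, hx, y, hy, h.symm⟩

lemma latGen_mono {L : Type*} [Lattice L] (S : Set L) : Monotone (latGen S) :=
  monotone_nat_of_le_succ fun _ x hx => ⟨x, hx, x, hx, Or.inl (by simp)⟩

/-- In a finitely generated infinite lattice of length 3 there is an injective
sequence avoiding `⊥` and `⊤`, with consecutive terms comparable, whose terms
alternate between atoms and coatoms. -/
theorem fg_infinite_length_three_lattice_alternating_sequence {L : Type*} [Lattice L]
    [BoundedOrder L] [Infinite L] (hbot_top : (⊥ : L) ≠ ⊤)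
    (hlen : ∀ z : L, z ≠ ⊥ → z ≠ ⊤ → IsAtom z ∨ IsCoatom z)
    (hfg : LatticeFG L) :
    ∃ f : ℕ → L, Function.Injective f ∧
      (∀ n : ℕ, f n ≠ ⊥ ∧ f n ≠ ⊤) ∧
      (∀ n : ℕ, f n ≤ f (n + 1) ∨ f (n + 1) ≤ f n) ∧
      ((∀ n : ℕ, IsAtom (f (2 * n)) ∧ IsCoatom (f (2 * n + 1))) ∨
       (∀ n : ℕ, IsCoatom (f (2 * n)) ∧ IsAtom (f (2 * n + 1)))) := by
  classical
  obtain ⟨S, hS, hgen⟩ := hfg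
  let r : L → ℕ := fun z => Nat.find (hgen z)
  have hmem : ∀ z, z ∈ latGen S (r z) := fun z => Nat.find_spec (hgen z)
  have hle : ∀ z n, z ∈ latGen S n → r z ≤ n := fun z n h => Nat.find_min' (hgen z) h
  have hmem' : ∀ z n, r z ≤ n → z ∈ latGen S n := fun z n h => latGen_mono S h (hmem z)
  have hrfin : ∀ n, {z | r z = n}.Finite := fun n =>
    (latGen_finite S hS n).subset fun z hz => hmem' z n (le_of_eq hz)
  have hpar : ∀ z, ∃ w, 0 < r z → r w + 1 = r z ∧ (z < w ∨ w < z) := by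
    intro z
    by_cases h0 : 0 < r z
    swap
    · exact ⟨z, fun h => absurd h h0⟩
    obtain ⟨m, hm⟩ : ∃ m, r z = m + 1 := ⟨r z - 1, by omega⟩
    have hz := hmem z
    rw [hm] at hz
    obtain ⟨x, hx, y, hy, h⟩ := hz
    have hxm := hle x m hx
    have hym := hle y m hy
    have hxz : x ≠ z := by rintro rfl; omega
    have hyz : y ≠ z := by rintro rfl; omega
    have key : r x = m ∨ r y = m := by
      by_contra hcon
      push Not at hcon
      obtain ⟨k, rfl⟩ : ∃ k, m = k + 1 := ⟨m - 1, by omega⟩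
      have := hle z (k + 1) ⟨x, hmem' x k (by omega), y, hmem' y k (by omega), h⟩
      omega
    have cx : z < x ∨ x < z := by
      rcases h with h | h
      · exact Or.inl (lt_of_le_of_ne (h ▸ inf_le_left) hxz.symm)
      · exact Or.inr (lt_of_le_of_ne (h ▸ le_sup_left) hxz)
    have cy : z < y ∨ y < z := by
      rcases h with h | h
      · exact Or.inl (lt_of_le_of_ne (h ▸ inf_le_right) hyz.symm)
      · exact Or.inr (lt_of_le_of_ne (h ▸ le_sup_right) hyz)
    rcases key with k | k
    · exact ⟨x, fun _ => ⟨by omega, cx⟩⟩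
    · exact ⟨y, fun _ => ⟨by omega, cy⟩⟩
  choose p hp using hpar
  obtain ⟨f, hf⟩ := konig_aux r hrfin p (r ⊥ + r ⊤ + 1) (fun z hz => (hp z (by omega)).1)
  have hrf : ∀ n, r (f n) = r ⊥ + r ⊤ + 1 + n := fun n => (hf n).1
  have hb : ∀ n, f n ≠ ⊥ := fun n h => by
    have := hrf n
    rw [h] at this
    omega
  have ht : ∀ n, f n ≠ ⊤ := fun n h => by
    have := hrf n
    rw [h] at this
    omega
  have hc : ∀ n, f n < f (n + 1) ∨ f (n + 1) < f n := fun n => by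
    have h1 := hrf (n + 1)
    have h2 := (hp (f (n + 1)) (by omega)).2
    rw [(hf n).2] at h2
    exact h2.symm
  have hac : ∀ m n, f m < f n → IsAtom (f m) ∧ IsCoatom (f n) := by
    intro m n h
    constructor
    · exact (hlen _ (hb m) (ht m)).resolve_right fun hh => ht n (hh.2 _ h)
    · exact (hlen _ (hb n) (ht n)).resolve_left fun hh => hb m (hh.2 _ h)
  have up : ∀ n, f n < f (n + 1) → f (n + 1 + 1) < f (n + 1) := fun n h =>
    (hc (n + 1)).resolve_left fun h' => hb n ((hac _ _ h').1.2 _ h)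
  have dn : ∀ n, f (n + 1) < f n → f (n + 1) < f (n + 1 + 1) := fun n h =>
    (hc (n + 1)).resolve_right fun h' => ht n ((hac _ _ h').2.2 _ h)
  refine ⟨f, ?_, fun n => ⟨hb n, ht n⟩, fun n => (hc n).imp le_of_lt le_of_lt, ?_⟩
  · intro a b h
    have h1 := hrf a
    have h2 := hrf b
    rw [h] at h1
    omega
  · rcases hc 0 with h | h
    · left
      have : ∀ n, f (2 * n) < f (2 * n + 1) := by
        intro n
        induction n with
        | zero => exact h
        | succ n ih => exact dn _ (up _ ih)
      exact fun n => hac _ _ (this n)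
    · right
      have : ∀ n, f (2 * n + 1) < f (2 * n) := by
        intro n
        induction n with
        | zero => exact h
        | succ n ih => exact up _ (dn _ ih)
      exact fun n => (hac _ _ (this n)).symm
end

section
/- For every injective function f : ℕ → ℕ there exists a graph G with vertex set ℕ such that: (i) n and n+1 are adjacent in G for every n ∈ ℕ (so G is traceable via the identity); (ii) G contains no chordless 4-path; and (iii) for every injective map g from the vertices of the complete countable bipartite graph K_{ω,ω} into ℕ such that adjacent vertices of K_{ω,ω} are mapped to adjacent vertices of G, and for every k ∈ ℕ, k is in the range of f if and only if there exists x ≤ max{g(a_i) : i ≤ k} with f(x) = k, where {a_n : n ∈ ℕ} is one of the two parts of K_{ω,ω}. -/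
/-- The adjacency relation: `s` sends `n` to the next special vertex `≥ n`. -/
def codeAdj (s : ℕ → ℕ) (n m : ℕ) : Prop :=
  (n < m ∧ (s n = n ∨ m ≤ s n)) ∨ (m < n ∧ (s m = m ∨ n ≤ s m))

theorem codeAdj_no_path (s : ℕ → ℕ) (h1 : ∀ n, n ≤ s n)
    (h3 : ∀ n m, n ≤ m → m ≤ s n → s m = s n) (h4 : ∀ n m, s n < m → s n < s m)
    (h5 : ∀ n, s (s n) = s n)
    (a b c d : ℕ) (ab : codeAdj s a b) (bc : codeAdj s b c) (cd : codeAdj s c d)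
    (hac : a ≠ c) (hbd : b ≠ d) (had : a ≠ d)
    (nac : ¬ codeAdj s a c) (nbd : ¬ codeAdj s b d) (nad : ¬ codeAdj s a d) : False := by
  unfold codeAdj at *
  have := h1 a
  have := h1 b
  have := h1 c
  have := h1 d
  have := h3 a b
  have := h3 b a
  have := h3 b c
  have := h3 c b
  have := h3 c d
  have := h3 d c
  grind

theorem exists_graph_coding_range_via_Komegaomega (f : ℕ → ℕ) (hf : Function.Injective f) :
    ∃ G : SimpleGraph ℕ,
      (∀ n : ℕ, G.Adj n (n + 1)) ∧
      ¬ HasChordlessPath G 4 ∧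
      ∀ g : ℕ ⊕ ℕ → ℕ, Function.Injective g →
        (∀ x y : ℕ ⊕ ℕ, (completeBipartiteGraph ℕ ℕ).Adj x y → G.Adj (g x) (g y)) →
        ∀ k : ℕ, (∃ x : ℕ, f x = k) ↔
          ∃ x ≤ (Finset.range (k + 1)).sup (fun i => g (Sum.inl i)), f x = k := by
  classical
  have hD : ∀ N, ∃ d, N ≤ d ∧ ∀ m, d < m → f d < f m := by
    intro N
    have hne : ∃ v, ∃ d, N ≤ d ∧ f d = v := ⟨_, N, le_rfl, rfl⟩
    obtain ⟨d, hd, hv⟩ := Nat.find_spec hne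
    refine ⟨d, hd, fun m hm => ?_⟩
    have h := Nat.find_min' hne ⟨m, by omega, rfl⟩
    have h2 : f d ≠ f m := fun h => by have := hf h; omega
    omega
  let s : ℕ → ℕ := fun N => Nat.find (hD N)
  have h1 : ∀ n, n ≤ s n := fun n => (Nat.find_spec (hD n)).1
  have h2 : ∀ n m, s n < m → f (s n) < f m := fun n => (Nat.find_spec (hD n)).2
  have hmin : ∀ n d, n ≤ d → (∀ m, d < m → f d < f m) → s n ≤ d :=
    fun n d a b => Nat.find_min' (hD n) ⟨a, b⟩
  have h3 : ∀ n m, n ≤ m → m ≤ s n → s m = s n := fun n m a b =>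
    le_antisymm (hmin _ _ b (h2 n)) (hmin _ _ (a.trans (h1 m)) (h2 m))
  have h4 : ∀ n m, s n < m → s n < s m := fun n m h => h.trans_le (h1 m)
  have h5 : ∀ n, s (s n) = s n := fun n => h3 _ _ (h1 n) le_rfl
  clear_value s
  refine ⟨⟨codeAdj s, ⟨fun a b h => ?_⟩, ⟨fun a h => ?_⟩⟩, ?_, ?_, ?_⟩
  · unfold codeAdj at *; omega
  · unfold codeAdj at *; omega
  · intro n
    have := h1 n
    simp only [codeAdj]; omega
  · rintro ⟨v, hv, h⟩
    simp only at h
    have e : ∀ i j : Fin 4, i ≠ j → v i ≠ v j := fun i j h h' => h (hv h')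
    refine codeAdj_no_path s h1 h3 h4 h5 (v 0) (v 1) (v 2) (v 3) ((h _ _).2 ?_) ((h _ _).2 ?_)
      ((h _ _).2 ?_) (e _ _ ?_) (e _ _ ?_) (e _ _ ?_) (fun t => absurd ((h _ _).1 t) ?_)
      (fun t => absurd ((h _ _).1 t) ?_) (fun t => absurd ((h _ _).1 t) ?_) <;> decide
  · intro g hg hadj k
    refine ⟨?_, fun ⟨x, _, hx⟩ => ⟨x, hx⟩⟩
    rintro ⟨x, hx⟩
    refine ⟨x, ?_, hx⟩
    have hfix : ∀ i, s (g (Sum.inl i)) = g (Sum.inl i) := by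
      intro i
      by_contra hne
      have hb : ∀ j, g (Sum.inr j) ∈ Finset.range (s (g (Sum.inl i)) + 1) := by
        intro j
        have : codeAdj s _ _ := hadj (Sum.inl i) (Sum.inr j) (by simp)
        have := h1 (g (Sum.inl i))
        unfold codeAdj at *
        simp only [Finset.mem_range]
        omega
      have hinj : Function.Injective (fun j => g (Sum.inr j)) := hg.comp Sum.inr_injective
      exact Set.infinite_range_of_injective hinj
        ((Finset.finite_toSet _).subset (by rintro _ ⟨j, rfl⟩; exact hb j))
    by_contra! hlt
    have hl : ∀ i ∈ Finset.range (k + 1), f (g (Sum.inl i)) ∈ Finset.range k := by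
      intro i hi
      have := (Finset.le_sup (f := fun i => g (Sum.inl i)) hi).trans_lt hlt
      have h := h2 (g (Sum.inl i)) x (by rw [hfix]; exact this)
      rw [hfix, hx] at h
      exact Finset.mem_range.2 h
    have := Finset.card_le_card_of_injOn (fun i => f (g (Sum.inl i))) hl
      ((hf.comp (hg.comp Sum.inl_injective)).injOn)
    simp at this
end
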